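/- arXiv:1004.0680 — 3 statements merged into one kernel-verified Lean document; each statement's English description precedes it below -/
import Mathlib

section
/- Let H₁, H₂ ∈ (0,1) and α > 0 satisfy α − 4H₂ + H₁ + 2 > 0. Let B^{H₁} be a fractional Brownian motion with Hurst parameter H₁, and for n ≥ 2 set T''_n = Σ_{0≤i≠j≤n−1} E[K(n^α B^{H₁}_i) K(n^α B^{H₁}_j)] · f_{H₂}(i,j). Then lim_{n→∞} n^{α+H₁−1} T''_n = 0. -/
open MeasureTheory ProbabilityTheory Filter Topology Real

/-- The standard Gaussian kernel `K(x) = (2π)^{-1/2} e^{-x²/2}`. -/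
noncomputable def K (x : ℝ) : ℝ := (Real.sqrt (2 * Real.pi))⁻¹ * Real.exp (-(x ^ 2) / 2)

/-- Covariance function of fractional Brownian motion with Hurst parameter `H`. -/
noncomputable def RH (H t s : ℝ) : ℝ :=
  (t ^ (2 * H) + s ^ (2 * H) - |t - s| ^ (2 * H)) / 2

/-- `f_{H₂}(i,j) = (1/2)(|i−j+1|^{2H₂} + |i−j−1|^{2H₂} − 2|i−j|^{2H₂})`,
the covariance of two unit increments of fBm with Hurst parameter `H₂`. -/
noncomputable def fH (H₂ : ℝ) (i j : ℕ) : ℝ :=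
  (|(i : ℝ) - j + 1| ^ (2 * H₂) + |(i : ℝ) - j - 1| ^ (2 * H₂)
    - 2 * |(i : ℝ) - j| ^ (2 * H₂)) / 2

/-- `B` is a fractional Brownian motion with Hurst parameter `H` on `(Ω, μ)`:
a centered Gaussian process, starting from `0`, with covariance `R_H`. -/
structure IsFBM {Ω : Type*} [MeasurableSpace Ω] (μ : Measure Ω) (H : ℝ)
    (B : ℝ → Ω → ℝ) : Prop where
  meas : ∀ t : ℝ, Measurable (B t)
  zero : ∀ᵐ ω ∂μ, B 0 ω = 0
  gaussian : ∀ (n : ℕ) (t : Fin n → ℝ) (c : Fin n → ℝ), (∀ i, 0 ≤ t i) →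
    ∃ v : NNReal, μ.map (fun ω => ∑ i, c i * B (t i) ω) = gaussianReal 0 v
  cov : ∀ s t : ℝ, 0 ≤ s → 0 ≤ t → ∫ ω, B s ω * B t ω ∂μ = RH H s t

/-!
A nondegenerate Gaussian pair with covariance determinant `D` has density at most `(2π √D)⁻¹`, so
`E[K(mX) K(mY)] ≤ (2π √D m²)⁻¹`. For a fractional Brownian motion at times `s < t`, `D` is four
times the squared area of the triangle with sides `s^H`, `(t - s)^H` and `t^H`; as `t^H` exceeds the
longer of the other two sides by at most `H` times the shorter one,
`D ≥ (1 - H) / 4 * (s^H (t - s)^H)²`. Since `|f_{H₂}(i, j)| ≤ |i - j|^(2 H₂ - 2)`, the double sum is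
then dominated by the product of a sum over the earlier time and a sum over the lag. Time `0`, where
the process vanishes, is treated separately, with a bound of order `m⁻¹`.
-/

section GaussianDensityBound

variable {Ω : Type*} [MeasurableSpace Ω] {μ : Measure Ω}

lemma gaussianPDFReal_le_inv_sqrt (a : ℝ) (v : NNReal) (x : ℝ) :
    gaussianPDFReal a v x ≤ (√(2 * π * v))⁻¹ :=
  mul_le_of_le_one_right (by positivity) <| exp_le_one_iff.2 <|
    div_nonpos_of_nonpos_of_nonneg (neg_nonpos.2 (sq_nonneg _)) (by positivity)

lemma gaussianReal_le_smul_volume (a : ℝ) {v : NNReal} (hv : v ≠ 0) :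
    gaussianReal a v ≤ ENNReal.ofReal (√(2 * π * v))⁻¹ • volume := by
  rw [gaussianReal_of_var_ne_zero a hv, ← withDensity_const]
  exact withDensity_mono <| ae_of_all _ fun x =>
    ENNReal.ofReal_le_ofReal (gaussianPDFReal_le_inv_sqrt a v x)

lemma map_le_smul_volume_of_hasGaussianLaw {X : Ω → ℝ} (hX : HasGaussianLaw X μ)
    (hvar : 0 < Var[X; μ]) :
    μ.map X ≤ ENNReal.ofReal (√(2 * π * Var[X; μ]))⁻¹ • volume := by
  rw [hX.map_eq_gaussianReal]
  simpa only [Real.coe_toNNReal _ hvar.le] using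
    gaussianReal_le_smul_volume μ[X] (Real.toNNReal_pos.2 hvar).ne'

lemma covariance_sub_regression [IsFiniteMeasure μ] {X Y : Ω → ℝ} (hX : MemLp X 2 μ)
    (hY : MemLp Y 2 μ) (hvar : Var[X; μ] ≠ 0) :
    cov[X, fun ω => Y ω - cov[X, Y; μ] / Var[X; μ] * X ω; μ] = 0 := by
  rw [covariance_fun_sub_right hX hY (hX.const_mul _), covariance_const_mul_right,
    covariance_self hX.aemeasurable, div_mul_cancel₀ _ hvar, sub_self]

lemma variance_sub_regression [IsFiniteMeasure μ] {X Y : Ω → ℝ} (hX : MemLp X 2 μ)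
    (hY : MemLp Y 2 μ) (hvar : Var[X; μ] ≠ 0) :
    Var[fun ω => Y ω - cov[X, Y; μ] / Var[X; μ] * X ω; μ] =
      (Var[X; μ] * Var[Y; μ] - cov[X, Y; μ] ^ 2) / Var[X; μ] := by
  rw [variance_fun_sub hY (hX.const_mul _), variance_const_mul, covariance_const_mul_right,
    covariance_comm]
  field_simp
  ring

lemma measurePreserving_shear (r : ℝ) :
    MeasurePreserving (fun p : ℝ × ℝ => (p.1, p.2 + r * p.1)) volume volume :=
  (MeasurePreserving.id volume).skew_product (g := fun x z => z + r * x) (by fun_prop) <|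
    ae_of_all _ fun x => (measurePreserving_add_right volume (r * x)).map_eq

lemma map_prodMk_add_mul_le_smul_volume [IsFiniteMeasure μ] {X Z : Ω → ℝ} (hX : AEMeasurable X μ)
    (hZ : AEMeasurable Z μ) (hXZ : IndepFun X Z μ) {a b : ENNReal} (hXle : μ.map X ≤ a • volume)
    (hZle : μ.map Z ≤ b • volume) (r : ℝ) :
    μ.map (fun ω => (X ω, Z ω + r * X ω)) ≤ (a * b) • volume := by
  have hshear := measurePreserving_shear r
  calc μ.map (fun ω => (X ω, Z ω + r * X ω))
      = ((μ.map X).prod (μ.map Z)).map (fun p => (p.1, p.2 + r * p.1)) := by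
        rw [← (indepFun_iff_map_prod_eq_prod_map_map hX hZ).1 hXZ,
          AEMeasurable.map_map_of_aemeasurable (by fun_prop) (hX.prodMk hZ)]
        rfl
    _ ≤ ((a • volume).prod (b • volume)).map (fun p : ℝ × ℝ => (p.1, p.2 + r * p.1)) :=
        Measure.map_mono (Measure.prod_mono hXle hZle) hshear.measurable
    _ = (a * b) • volume := by
        rw [Measure.prod_smul_left, Measure.prod_smul_right, ← Measure.volume_eq_prod, smul_smul,
          Measure.map_smul, hshear.map_eq]

lemma hasGaussianLaw_prodMk_sub_mul {X Y : Ω → ℝ} (hXY : HasGaussianLaw (fun ω => (X ω, Y ω)) μ)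
    (r : ℝ) : HasGaussianLaw (fun ω => (X ω, Y ω - r * X ω)) μ :=
  hXY.map_fun ((ContinuousLinearMap.fst ℝ ℝ ℝ).prod
    (ContinuousLinearMap.snd ℝ ℝ ℝ - r • ContinuousLinearMap.fst ℝ ℝ ℝ))

/- Subtracting from `Y` its regression on `X` leaves a Gaussian variable independent of `X`; undoing
this is a shear, which preserves area, so the two one-dimensional density bounds multiply. -/
lemma map_prodMk_le_smul_volume_of_hasGaussianLaw {X Y : Ω → ℝ}
    (hXY : HasGaussianLaw (fun ω => (X ω, Y ω)) μ)
    (hdet : 0 < Var[X; μ] * Var[Y; μ] - cov[X, Y; μ] ^ 2) :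
    μ.map (fun ω => (X ω, Y ω)) ≤
      ENNReal.ofReal (2 * π * √(Var[X; μ] * Var[Y; μ] - cov[X, Y; μ] ^ 2))⁻¹ • volume := by
  have := hXY.isProbabilityMeasure
  have hX := hXY.fst.memLp_two
  have hY := hXY.snd.memLp_two
  have hvarX : 0 < Var[X; μ] :=
    pos_of_mul_pos_left (by linarith [sq_nonneg cov[X, Y; μ]]) (variance_nonneg Y μ)
  set r := cov[X, Y; μ] / Var[X; μ]
  set Z : Ω → ℝ := fun ω => Y ω - r * X ω with hZ
  have hXZ : HasGaussianLaw (fun ω => (X ω, Z ω)) μ := hasGaussianLaw_prodMk_sub_mul hXY r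
  have hvarZ : Var[Z; μ] = (Var[X; μ] * Var[Y; μ] - cov[X, Y; μ] ^ 2) / Var[X; μ] :=
    variance_sub_regression hX hY hvarX.ne'
  have hindep : IndepFun X Z μ :=
    hXZ.indepFun_of_covariance_eq_zero (covariance_sub_regression hX hY hvarX.ne')
  have hconst : (√(2 * π * Var[X; μ]))⁻¹ * (√(2 * π * Var[Z; μ]))⁻¹ =
      (2 * π * √(Var[X; μ] * Var[Y; μ] - cov[X, Y; μ] ^ 2))⁻¹ := by
    rw [← mul_inv, ← sqrt_mul (by positivity), mul_mul_mul_comm, ← sq, hvarZ,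
      mul_div_cancel₀ _ hvarX.ne', sqrt_mul (by positivity), sqrt_sq (by positivity)]
  have hle := map_prodMk_add_mul_le_smul_volume hX.aemeasurable hXZ.snd.aemeasurable hindep
    (map_le_smul_volume_of_hasGaussianLaw hXY.fst hvarX)
    (map_le_smul_volume_of_hasGaussianLaw hXZ.snd (hvarZ ▸ div_pos hdet hvarX)) r
  rw [← ENNReal.ofReal_mul (by positivity), hconst] at hle
  simpa only [hZ, sub_add_cancel] using hle

lemma integral_comp_le_of_map_le_smul {E : Type*} [MeasurableSpace E] {ν : Measure E} {X : Ω → E}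
    (hX : AEMeasurable X μ) {c : ℝ} (hc : 0 ≤ c) (hle : μ.map X ≤ ENNReal.ofReal c • ν)
    {g : E → ℝ} (hg : 0 ≤ g) (hgi : Integrable g ν) :
    ∫ ω, g (X ω) ∂μ ≤ c * ∫ x, g x ∂ν := by
  have hgi' : Integrable g (ENNReal.ofReal c • ν) := hgi.smul_measure ENNReal.ofReal_ne_top
  rw [← integral_map hX (hgi'.mono_measure hle).aestronglyMeasurable]
  simpa only [integral_smul_measure, ENNReal.toReal_ofReal hc, smul_eq_mul] using
    integral_mono_measure hle (ae_of_all _ hg) hgi'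

end GaussianDensityBound

section Kernel

lemma K_eq_gaussianPDFReal : K = gaussianPDFReal 0 1 := by
  ext x
  simp [K, gaussianPDFReal]

lemma K_nonneg (x : ℝ) : 0 ≤ K x :=
  K_eq_gaussianPDFReal ▸ gaussianPDFReal_nonneg 0 1 x

lemma integrable_K_mul {m : ℝ} (hm : m ≠ 0) : Integrable fun x => K (m * x) :=
  (K_eq_gaussianPDFReal ▸ integrable_gaussianPDFReal 0 1).comp_mul_left' hm

lemma integral_K_mul (m : ℝ) : ∫ x, K (m * x) = |m|⁻¹ := by
  rw [Measure.integral_comp_mul_left, K_eq_gaussianPDFReal,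
    integral_gaussianPDFReal_eq_one 0 one_ne_zero, smul_eq_mul, mul_one, abs_inv]

variable {Ω : Type*} [MeasurableSpace Ω] {μ : Measure Ω} {m : ℝ}

lemma integral_K_mul_le_of_hasGaussianLaw {X : Ω → ℝ} (hX : HasGaussianLaw X μ)
    (hvar : 0 < Var[X; μ]) (hm : 0 < m) :
    ∫ ω, K (m * X ω) ∂μ ≤ (√(2 * π * Var[X; μ]))⁻¹ * m⁻¹ := by
  simpa only [integral_K_mul, abs_of_pos hm] using
    integral_comp_le_of_map_le_smul hX.aemeasurable (by positivity)
      (map_le_smul_volume_of_hasGaussianLaw hX hvar) (fun x => K_nonneg (m * x))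
      (integrable_K_mul hm.ne')

lemma integral_K_mul_K_mul_le_of_hasGaussianLaw {X Y : Ω → ℝ}
    (hXY : HasGaussianLaw (fun ω => (X ω, Y ω)) μ)
    (hdet : 0 < Var[X; μ] * Var[Y; μ] - cov[X, Y; μ] ^ 2) (hm : 0 < m) :
    ∫ ω, K (m * X ω) * K (m * Y ω) ∂μ ≤
      (2 * π * √(Var[X; μ] * Var[Y; μ] - cov[X, Y; μ] ^ 2))⁻¹ * (m ^ 2)⁻¹ := by
  have hint : ∫ p : ℝ × ℝ, K (m * p.1) * K (m * p.2) = (m ^ 2)⁻¹ := by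
    rw [Measure.volume_eq_prod, integral_prod_mul (fun x => K (m * x)) fun y => K (m * y),
      integral_K_mul, abs_of_pos hm, ← mul_inv, sq]
  rw [← hint]
  exact integral_comp_le_of_map_le_smul (g := fun p => K (m * p.1) * K (m * p.2))
    hXY.aemeasurable (by positivity) (map_prodMk_le_smul_volume_of_hasGaussianLaw hXY hdet)
    (fun p => mul_nonneg (K_nonneg _) (K_nonneg _))
    ((integrable_K_mul hm.ne').mul_prod (integrable_K_mul hm.ne'))

end Kernel

section PowerEstimates

lemma rpow_two_mul {x : ℝ} (hx : 0 ≤ x) (y : ℝ) : x ^ (2 * y) = (x ^ y) ^ 2 := by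
  rw [mul_comm]
  exact_mod_cast rpow_mul_natCast hx y 2

lemma one_add_rpow_le {p y : ℝ} (hp₀ : 0 ≤ p) (hp₂ : p ≤ 2) (hy : -1 ≤ y) :
    (1 + y) ^ p ≤ 1 + p / 2 * (2 * y + y ^ 2) := by
  have hsq : (1 + y) ^ p = (1 + (2 * y + y ^ 2)) ^ (p / 2) := by
    rw [show 1 + (2 * y + y ^ 2) = (1 + y) ^ (2 : ℝ) by rw [rpow_two]; ring,
      ← rpow_mul (by linarith), mul_div_cancel₀ p two_ne_zero]
  rw [hsq]
  exact rpow_one_add_le_one_add_mul_self (by nlinarith [sq_nonneg (1 + y)]) (by linarith)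
    (by linarith)

lemma two_mul_one_sub_sq_le_rpow_add_rpow {p x : ℝ} (hp₂ : p ≤ 2) (hx : |x| ≤ 1) :
    2 * (1 - x ^ 2) ≤ (1 + x) ^ p + (1 - x) ^ p := by
  obtain ⟨hx₁, hx₂⟩ := abs_le.1 hx
  have hhalf {y : ℝ} (hy : 0 ≤ y) : y ^ p = (y ^ (p / 2)) ^ 2 := by
    rw [← rpow_two_mul hy, mul_div_cancel₀ p two_ne_zero]
  have hprod : (1 + x) ^ (p / 2) * (1 - x) ^ (p / 2) = (1 - x ^ 2) ^ (p / 2) := by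
    rw [← mul_rpow (by linarith) (by linarith)]
    ring_nf
  have hself : 1 - x ^ 2 ≤ (1 - x ^ 2) ^ (p / 2) :=
    self_le_rpow_of_le_one (by nlinarith) (by nlinarith) (by linarith)
  calc 2 * (1 - x ^ 2) ≤ 2 * (1 + x) ^ (p / 2) * (1 - x) ^ (p / 2) := by linarith
    _ ≤ ((1 + x) ^ (p / 2)) ^ 2 + ((1 - x) ^ (p / 2)) ^ 2 := two_mul_le_add_sq _ _
    _ = (1 + x) ^ p + (1 - x) ^ p := by rw [hhalf (by linarith), hhalf (by linarith)]

lemma abs_second_difference_rpow_le {p x : ℝ} (hp₀ : 0 ≤ p) (hp₂ : p ≤ 2) (hx : 1 ≤ x) :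
    |(x + 1) ^ p + (x - 1) ^ p - 2 * x ^ p| ≤ 2 * x ^ (p - 2) := by
  have hx₀ : 0 < x := by linarith
  have hinv : x⁻¹ ≤ 1 := inv_le_one_of_one_le₀ hx
  have hinv₀ : 0 < x⁻¹ := inv_pos.2 hx₀
  have hlower := two_mul_one_sub_sq_le_rpow_add_rpow hp₂ ((abs_of_pos hinv₀).trans_le hinv)
  have hupper : (1 + x⁻¹) ^ p + (1 - x⁻¹) ^ p ≤ 2 + 2 * x⁻¹ ^ 2 := by
    have hplus := one_add_rpow_le hp₀ hp₂ (by linarith : -1 ≤ x⁻¹)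
    have hminus := one_add_rpow_le hp₀ hp₂ (by linarith : -1 ≤ -x⁻¹)
    rw [← sub_eq_add_neg] at hminus
    nlinarith [sq_nonneg x⁻¹]
  have hplus : (x + 1) ^ p = x ^ p * (1 + x⁻¹) ^ p := by
    rw [← mul_rpow hx₀.le (by positivity), mul_add, mul_one, mul_inv_cancel₀ hx₀.ne']
  have hminus : (x - 1) ^ p = x ^ p * (1 - x⁻¹) ^ p := by
    rw [← mul_rpow hx₀.le (by linarith), mul_sub, mul_one, mul_inv_cancel₀ hx₀.ne']
  calc |(x + 1) ^ p + (x - 1) ^ p - 2 * x ^ p|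
      = x ^ p * |(1 + x⁻¹) ^ p + (1 - x⁻¹) ^ p - 2| := by
        rw [← abs_of_pos (rpow_pos_of_pos hx₀ p), ← abs_mul, abs_of_pos (rpow_pos_of_pos hx₀ p),
          hplus, hminus]
        ring_nf
    _ ≤ x ^ p * (2 * x⁻¹ ^ 2) := by
        gcongr
        exact abs_le.2 ⟨by linarith, by linarith⟩
    _ = 2 * x ^ (p - 2) := by
        rw [rpow_sub hx₀, rpow_two]
        ring

lemma add_rpow_le_rpow_add_mul_rpow {H s t : ℝ} (hH₀ : 0 ≤ H) (hH₁ : H ≤ 1) (hs : 0 ≤ s)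
    (ht : 0 < t) (hst : s ≤ t) : (t + s) ^ H ≤ t ^ H + H * s ^ H := by
  have hst₀ : 0 ≤ s / t := by positivity
  have hbernoulli : (1 + s / t) ^ H ≤ 1 + H * (s / t) :=
    rpow_one_add_le_one_add_mul_self (by linarith) hH₀ hH₁
  have hself : s / t ≤ (s / t) ^ H :=
    self_le_rpow_of_le_one hst₀ ((div_le_one ht).2 hst) hH₁
  calc (t + s) ^ H = t ^ H * (1 + s / t) ^ H := by
        rw [← mul_rpow ht.le (by positivity), mul_add, mul_one, mul_div_cancel₀ s ht.ne']
    _ ≤ t ^ H * (1 + H * (s / t) ^ H) := by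
        gcongr
        exact hbernoulli.trans (by gcongr)
    _ = t ^ H + H * s ^ H := by
        rw [div_rpow hs ht.le]
        field_simp

lemma sum_Icc_rpow_le {δ : ℝ} (hδ₀ : 0 < δ) (hδ₁ : δ ≤ 1) (n : ℕ) :
    ∑ k ∈ Finset.Icc 1 n, (k : ℝ) ^ (δ - 1) ≤ (n : ℝ) ^ δ / δ := by
  induction n with
  | zero => simp [zero_rpow hδ₀.ne']
  | succ n ih =>
    set x : ℝ := ((n + 1 : ℕ) : ℝ) with hx
    have hx₁ : 1 ≤ x := by simp [hx]
    have hx₀ : 0 < x := by linarith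
    have hn : (n : ℝ) = x * (1 + -x⁻¹) := by
      rw [hx]
      push_cast
      field_simp
      ring
    have hinv : x⁻¹ ≤ 1 := inv_le_one_of_one_le₀ hx₁
    have hstep : (n : ℝ) ^ δ ≤ x ^ δ - δ * x ^ (δ - 1) :=
      calc (n : ℝ) ^ δ = x ^ δ * (1 + -x⁻¹) ^ δ := by rw [hn, mul_rpow hx₀.le (by linarith)]
        _ ≤ x ^ δ * (1 + δ * -x⁻¹) := by
          gcongr
          exact rpow_one_add_le_one_add_mul_self (by linarith) hδ₀.le hδ₁
        _ = x ^ δ - δ * x ^ (δ - 1) := by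
          rw [rpow_sub_one hx₀.ne']
          ring
    rw [Finset.sum_Icc_succ_top (by lia), ← hx]
    rw [le_div_iff₀ hδ₀] at ih ⊢
    linarith

end PowerEstimates

section Covariances

lemma fH_comm (H : ℝ) (i j : ℕ) : fH H i j = fH H j i := by
  unfold fH
  rw [abs_sub_comm (i : ℝ) j, show (i : ℝ) - j + 1 = -((j : ℝ) - i - 1) by ring,
    show (i : ℝ) - j - 1 = -((j : ℝ) - i + 1) by ring, abs_neg, abs_neg]
  ring

lemma abs_fH_le {H : ℝ} (hH₀ : 0 ≤ H) (hH₁ : H ≤ 1) {i j : ℕ} (hij : i < j) :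
    |fH H i j| ≤ ((j : ℝ) - i) ^ (2 * H - 2) := by
  have hlag : (1 : ℝ) ≤ (j : ℝ) - i := by
    have : (i : ℝ) + 1 ≤ j := by exact_mod_cast hij
    linarith
  rw [fH_comm, fH, abs_of_nonneg (by linarith : 0 ≤ (j : ℝ) - i + 1),
    abs_of_nonneg (by linarith : 0 ≤ (j : ℝ) - i - 1),
    abs_of_nonneg (by linarith : 0 ≤ (j : ℝ) - i), abs_div, abs_two, div_le_iff₀' two_pos]
  exact abs_second_difference_rpow_le (by linarith) (by linarith) hlag

lemma RH_self {H : ℝ} (hH : H ≠ 0) (t : ℝ) : RH H t t = t ^ (2 * H) := by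
  rw [RH, sub_self, abs_zero, zero_rpow (mul_ne_zero two_ne_zero hH)]
  ring

/- The right-hand side is sixteen times the squared area of a triangle with sides `a`, `b`, `c`. -/
lemma mul_sq_le_heron {θ a b c : ℝ} (hθ : θ ≤ 1) (hb : 0 ≤ b) (hba : b ≤ a) (hac : a ≤ c)
    (hc : c ≤ a + θ * b) :
    (1 - θ) * (a * b) ^ 2 ≤ ((a + b) ^ 2 - c ^ 2) * (c ^ 2 - (a - b) ^ 2) := by
  have ha : 0 ≤ a := hb.trans hba
  have hab : 0 ≤ a * b := mul_nonneg ha hb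
  have hinner : a * b ≤ c ^ 2 - (a - b) ^ 2 := by nlinarith
  have houter : (1 - θ) * (a * b) ≤ (a + b) ^ 2 - c ^ 2 :=
    calc (1 - θ) * (a * b) = (1 - θ) * b * a := by ring
      _ ≤ (a + b - c) * (a + b + c) := by
        gcongr <;> nlinarith
      _ = (a + b) ^ 2 - c ^ 2 := by ring
  have hθab : 0 ≤ (1 - θ) * (a * b) := mul_nonneg (by linarith) hab
  calc (1 - θ) * (a * b) ^ 2 = (1 - θ) * (a * b) * (a * b) := by ring
    _ ≤ ((a + b) ^ 2 - c ^ 2) * (c ^ 2 - (a - b) ^ 2) :=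
      mul_le_mul houter hinner hab (hθab.trans houter)

lemma RH_mul_RH_sub_sq_eq {H s t : ℝ} (hH : H ≠ 0) (hs : 0 ≤ s) (hst : s ≤ t) :
    RH H s s * RH H t t - RH H s t ^ 2 =
      ((s ^ H + (t - s) ^ H) ^ 2 - (t ^ H) ^ 2) *
        ((t ^ H) ^ 2 - (s ^ H - (t - s) ^ H) ^ 2) / 4 := by
  rw [RH_self hH, RH_self hH, RH, abs_sub_comm, abs_of_nonneg (sub_nonneg.2 hst), rpow_two_mul hs,
    rpow_two_mul (hs.trans hst), rpow_two_mul (sub_nonneg.2 hst)]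
  ring

lemma mul_sq_le_RH_mul_RH_sub_sq {H s t : ℝ} (hH₀ : 0 < H) (hH₁ : H ≤ 1) (hs : 0 < s)
    (hst : s < t) :
    (1 - H) / 4 * (s ^ H * (t - s) ^ H) ^ 2 ≤ RH H s s * RH H t t - RH H s t ^ 2 := by
  have hd : 0 < t - s := sub_pos.2 hst
  suffices (1 - H) * (s ^ H * (t - s) ^ H) ^ 2 ≤
      ((s ^ H + (t - s) ^ H) ^ 2 - (t ^ H) ^ 2) * ((t ^ H) ^ 2 - (s ^ H - (t - s) ^ H) ^ 2) by
    rw [RH_mul_RH_sub_sq_eq hH₀.ne' hs.le hst.le]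
    linarith
  rcases le_total (t - s) s with hds | hds
  · refine mul_sq_le_heron hH₁ (by positivity) (by gcongr) (by gcongr) ?_
    simpa using add_rpow_le_rpow_add_mul_rpow hH₀.le hH₁ hd.le hs hds
  · rw [mul_comm (s ^ H), add_comm (s ^ H), sub_sq_comm (s ^ H)]
    refine mul_sq_le_heron hH₁ (by positivity) (by gcongr) (by gcongr; linarith) ?_
    simpa using add_rpow_le_rpow_add_mul_rpow hH₀.le hH₁ hs.le hd hds

end Covariances

section DoubleSums

lemma sum_range_offDiag_eq_two_mul {R : Type*} [NonAssocSemiring R] {T : ℕ → ℕ → R}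
    (hT : ∀ i j, T i j = T j i) (n : ℕ) :
    ∑ i ∈ Finset.range n, ∑ j ∈ Finset.range n, (if i = j then 0 else T i j) =
      2 * ∑ i ∈ Finset.range n, ∑ j ∈ Finset.Ioo i n, T i j := by
  have hupper : ∑ i ∈ Finset.range n, ∑ j ∈ Finset.Ioo i n, T i j =
      ∑ i ∈ Finset.range n, ∑ j ∈ Finset.range n, if i < j then T i j else 0 := by
    refine Finset.sum_congr rfl fun i _ => ?_
    rw [← Finset.sum_filter]
    congr 1
    grind
  have hlower : ∑ i ∈ Finset.range n, ∑ j ∈ Finset.Ioo i n, T i j =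
      ∑ i ∈ Finset.range n, ∑ j ∈ Finset.range n, if j < i then T i j else 0 := by
    rw [hupper, Finset.sum_comm]
    simp only [hT]
  rw [two_mul, congrArg₂ (· + ·) hupper hlower, ← Finset.sum_add_distrib]
  refine Finset.sum_congr rfl fun i _ => ?_
  rw [← Finset.sum_add_distrib]
  refine Finset.sum_congr rfl fun j _ => ?_
  rcases lt_trichotomy i j with hij | rfl | hij
  · simp [hij, hij.ne, hij.not_gt]
  · simp
  · simp [hij, hij.ne', hij.not_gt]

lemma sum_Ioo_comp_sub_le {w : ℕ → ℝ} (hw : 0 ≤ w) (i n : ℕ) :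
    ∑ j ∈ Finset.Ioo i n, w (j - i) ≤ ∑ k ∈ Finset.Icc 1 n, w k := by
  have hinj : Set.InjOn (· - i) (Finset.Ioo i n : Set ℕ) := fun j hj k hk h => by
    simp only [Finset.coe_Ioo, Set.mem_Ioo] at hj hk
    lia
  rw [← Finset.sum_image (f := w) hinj]
  refine Finset.sum_le_sum_of_subset_of_nonneg ?_ fun k _ _ => hw k
  grind

lemma abs_sum_range_offDiag_le {T : ℕ → ℕ → ℝ} {a w : ℕ → ℝ} (hT : ∀ i j, T i j = T j i)
    (ha : 0 ≤ a) (hw : 0 ≤ w) (hle : ∀ i j, i < j → |T i j| ≤ a i * w (j - i)) (n : ℕ) :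
    |∑ i ∈ Finset.range n, ∑ j ∈ Finset.range n, (if i = j then 0 else T i j)| ≤
      2 * ((∑ i ∈ Finset.range n, a i) * ∑ k ∈ Finset.Icc 1 n, w k) := by
  rw [sum_range_offDiag_eq_two_mul hT, abs_mul, abs_two, Finset.sum_mul]
  gcongr
  refine (Finset.abs_sum_le_sum_abs _ _).trans (Finset.sum_le_sum fun i _ => ?_)
  calc |∑ j ∈ Finset.Ioo i n, T i j| ≤ ∑ j ∈ Finset.Ioo i n, |T i j| :=
        Finset.abs_sum_le_sum_abs _ _
    _ ≤ ∑ j ∈ Finset.Ioo i n, a i * w (j - i) :=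
        Finset.sum_le_sum fun j hj => hle i j (Finset.mem_Ioo.1 hj).1
    _ ≤ a i * ∑ k ∈ Finset.Icc 1 n, w k := by
        rw [← Finset.mul_sum]
        exact mul_le_mul_of_nonneg_left (sum_Ioo_comp_sub_le hw i n) (ha i)

end DoubleSums

namespace IsFBM

variable {Ω : Type*} [MeasurableSpace Ω] {μ : Measure Ω} {H : ℝ} {B : ℝ → Ω → ℝ}

lemma hasGaussianLaw_prodMk (hB : IsFBM μ H B) {s t : ℝ} (hs : 0 ≤ s) (ht : 0 ≤ t) :
    HasGaussianLaw (fun ω => (B s ω, B t ω)) μ := by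
  have hmeas : Measurable fun ω => (B s ω, B t ω) := (hB.meas s).prodMk (hB.meas t)
  refine ⟨isGaussian_of_map_eq_gaussianReal fun L => ?_⟩
  obtain ⟨v, hv⟩ := hB.gaussian 2 ![s, t] ![L (1, 0), L (0, 1)] (by simp [Fin.forall_fin_two, *])
  refine ⟨0, v, ?_⟩
  rw [Measure.map_map (by fun_prop) hmeas, ← hv]
  congr 1
  ext ω
  have hbasis : (B s ω, B t ω) = B s ω • ((1 : ℝ), (0 : ℝ)) + B t ω • ((0 : ℝ), (1 : ℝ)) := by simp
  simp only [Function.comp_apply, hbasis, map_add, map_smul, smul_eq_mul, Fin.sum_univ_two,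
    Matrix.cons_val_zero, Matrix.cons_val_one, mul_comm]

lemma integral_eq_zero (hB : IsFBM μ H B) {t : ℝ} (ht : 0 ≤ t) : ∫ ω, B t ω ∂μ = 0 := by
  obtain ⟨v, hv⟩ := hB.gaussian 1 ![t] ![1] (by simp [ht])
  have hlaw : μ.map (B t) = gaussianReal 0 v := by simpa using hv
  calc ∫ ω, B t ω ∂μ = ∫ x, x ∂μ.map (B t) :=
        (integral_map (f := fun x : ℝ => x) (hB.meas t).aemeasurable (by fun_prop)).symm
    _ = 0 := by rw [hlaw, integral_id_gaussianReal]

lemma covariance_eq (hB : IsFBM μ H B) {s t : ℝ} (hs : 0 ≤ s) (ht : 0 ≤ t) :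
    cov[B s, B t; μ] = RH H s t := by
  simp only [covariance, hB.integral_eq_zero hs, hB.integral_eq_zero ht, sub_zero, hB.cov s t hs ht]

lemma variance_eq (hB : IsFBM μ H B) {t : ℝ} (ht : 0 ≤ t) : Var[B t; μ] = RH H t t := by
  rw [← covariance_self (hB.meas t).aemeasurable, hB.covariance_eq ht ht]

lemma integral_K_mul_le (hB : IsFBM μ H B) (hH : H ≠ 0) {m t : ℝ} (hm : 0 < m) (ht : 0 < t) :
    ∫ ω, K (m * B t ω) ∂μ ≤ (√(2 * π))⁻¹ * m⁻¹ * t ^ (-H) := by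
  have hvar : Var[B t; μ] = (t ^ H) ^ 2 := by
    rw [hB.variance_eq ht.le, RH_self hH, rpow_two_mul ht.le]
  have hle := integral_K_mul_le_of_hasGaussianLaw (hB.hasGaussianLaw_prodMk ht.le ht.le).fst
    (hvar ▸ by positivity) hm
  rw [hvar, sqrt_mul (by positivity), sqrt_sq (by positivity)] at hle
  refine hle.trans_eq ?_
  rw [rpow_neg ht.le]
  ring

lemma integral_K_zero_mul_K_mul_le (hB : IsFBM μ H B) (hH : H ≠ 0) {m t : ℝ} (hm : 0 < m)
    (ht : 0 < t) :
    ∫ ω, K (m * B 0 ω) * K (m * B t ω) ∂μ ≤ (2 * π * m)⁻¹ * t ^ (-H) := by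
  have hzero : ∫ ω, K (m * B 0 ω) * K (m * B t ω) ∂μ = (√(2 * π))⁻¹ * ∫ ω, K (m * B t ω) ∂μ := by
    rw [← integral_const_mul]
    refine integral_congr_ae ?_
    filter_upwards [hB.zero] with ω hω
    simp [hω, K]
  calc ∫ ω, K (m * B 0 ω) * K (m * B t ω) ∂μ
      ≤ (√(2 * π))⁻¹ * ((√(2 * π))⁻¹ * m⁻¹ * t ^ (-H)) := by
        rw [hzero]
        gcongr
        exact hB.integral_K_mul_le hH hm ht
    _ = (√(2 * π) * √(2 * π))⁻¹ * m⁻¹ * t ^ (-H) := by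
        rw [mul_inv]
        ring
    _ = (2 * π * m)⁻¹ * t ^ (-H) := by
        rw [mul_self_sqrt (by positivity), ← mul_inv]

lemma integral_K_mul_K_mul_le (hB : IsFBM μ H B) (hH₀ : 0 < H) (hH₁ : H < 1) {m s t : ℝ}
    (hm : 0 < m) (hs : 0 < s) (hst : s < t) :
    ∫ ω, K (m * B s ω) * K (m * B t ω) ∂μ ≤
      (π * √(1 - H) * m ^ 2)⁻¹ * s ^ (-H) * (t - s) ^ (-H) := by
  have ht : 0 < t := hs.trans hst
  have hd : 0 < t - s := sub_pos.2 hst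
  have hH : 0 < 1 - H := sub_pos.2 hH₁
  have hdet : (1 - H) / 4 * (s ^ H * (t - s) ^ H) ^ 2 ≤
      Var[B s; μ] * Var[B t; μ] - cov[B s, B t; μ] ^ 2 := by
    rw [hB.variance_eq hs.le, hB.variance_eq ht.le, hB.covariance_eq hs.le ht.le]
    exact mul_sq_le_RH_mul_RH_sub_sq hH₀ hH₁.le hs hst
  have hsqrt : √(1 - H) / 2 * (s ^ H * (t - s) ^ H) =
      √((1 - H) / 4 * (s ^ H * (t - s) ^ H) ^ 2) := by
    rw [sqrt_mul (by positivity), sqrt_sq (by positivity), sqrt_div hH.le,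
      show (4 : ℝ) = 2 ^ 2 by norm_num, sqrt_sq two_pos.le]
  calc ∫ ω, K (m * B s ω) * K (m * B t ω) ∂μ
      ≤ (2 * π * √(Var[B s; μ] * Var[B t; μ] - cov[B s, B t; μ] ^ 2))⁻¹ * (m ^ 2)⁻¹ :=
        integral_K_mul_K_mul_le_of_hasGaussianLaw (hB.hasGaussianLaw_prodMk hs.le ht.le)
          (lt_of_lt_of_le (by positivity) hdet) hm
    _ ≤ (2 * π * (√(1 - H) / 2 * (s ^ H * (t - s) ^ H)))⁻¹ * (m ^ 2)⁻¹ := by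
        gcongr
        exact hsqrt.trans_le (sqrt_le_sqrt hdet)
    _ = (π * √(1 - H) * m ^ 2)⁻¹ * s ^ (-H) * (t - s) ^ (-H) := by
        rw [rpow_neg hs.le, rpow_neg hd.le]
        field_simp

end IsFBM

/-- The weight of the earlier time `i` in the bound
`E[K(m B_i) K(m B_j)] ≤ pairWeight H m i * (j - i)^(-H)` for `i < j`. Time `0` is separate because
`B_0 = 0`, so that only one of the two factors contributes a power of `m`. -/
noncomputable def pairWeight (H m : ℝ) (i : ℕ) : ℝ :=
  if i = 0 then (2 * π * m)⁻¹ else (π * √(1 - H) * m ^ 2)⁻¹ * (i : ℝ) ^ (-H)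

lemma pairWeight_nonneg {m : ℝ} (hm : 0 ≤ m) (H : ℝ) : 0 ≤ pairWeight H m := fun i => by
  simp only [pairWeight, Pi.zero_apply]
  positivity

lemma sum_pairWeight_le {H m : ℝ} (hH₀ : 0 ≤ H) (hH₁ : H < 1) (hm : 0 ≤ m) (n : ℕ) :
    ∑ i ∈ Finset.range n, pairWeight H m i ≤
      (2 * π * m)⁻¹ + (π * √(1 - H) * m ^ 2)⁻¹ * ((n : ℝ) ^ (1 - H) / (1 - H)) := by
  have hpow : ∑ i ∈ Finset.Icc 1 n, (i : ℝ) ^ (-H) ≤ (n : ℝ) ^ (1 - H) / (1 - H) := by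
    simpa using sum_Icc_rpow_le (sub_pos.2 hH₁) (by linarith) n
  calc ∑ i ∈ Finset.range n, pairWeight H m i
      ≤ ∑ i ∈ Finset.range (n + 1), pairWeight H m i :=
        Finset.sum_le_sum_of_subset_of_nonneg (Finset.range_subset_range.2 n.le_succ)
          fun i _ _ => pairWeight_nonneg hm H i
    _ = pairWeight H m 0 + ∑ i ∈ Finset.Icc 1 n, pairWeight H m i := by
        rw [Finset.sum_range_eq_add_Ico _ n.succ_pos]
        rfl
    _ = (2 * π * m)⁻¹ + (π * √(1 - H) * m ^ 2)⁻¹ * ∑ i ∈ Finset.Icc 1 n, (i : ℝ) ^ (-H) := by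
        rw [Finset.mul_sum, pairWeight, if_pos rfl]
        refine congrArg _ (Finset.sum_congr rfl fun i hi => if_neg ?_)
        exact (Nat.one_le_iff_ne_zero.1 (Finset.mem_Icc.1 hi).1)
    _ ≤ (2 * π * m)⁻¹ + (π * √(1 - H) * m ^ 2)⁻¹ * ((n : ℝ) ^ (1 - H) / (1 - H)) := by
        gcongr

/-- The sum `T''_n`, with the scale `n^α` replaced by a free parameter `m`. -/
noncomputable def offDiagonalSum {Ω : Type*} [MeasurableSpace Ω] (μ : Measure Ω) (B : ℝ → Ω → ℝ)
    (H₂ m : ℝ) (n : ℕ) : ℝ :=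
  ∑ i ∈ Finset.range n, ∑ j ∈ Finset.range n,
    if i = j then 0 else (∫ ω, K (m * B i ω) * K (m * B j ω) ∂μ) * fH H₂ i j

section Limit

variable {Ω : Type*} [MeasurableSpace Ω] {μ : Measure Ω} {H₁ H₂ : ℝ} {B : ℝ → Ω → ℝ}

lemma IsFBM.integral_K_mul_K_mul_le_pairWeight (hB : IsFBM μ H₁ B) (hH₁ : 0 < H₁) (hH₁' : H₁ < 1)
    {m : ℝ} (hm : 0 < m) {i j : ℕ} (hij : i < j) :
    ∫ ω, K (m * B i ω) * K (m * B j ω) ∂μ ≤ pairWeight H₁ m i * ((j : ℝ) - i) ^ (-H₁) := by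
  have hij' : (i : ℝ) < j := by exact_mod_cast hij
  rcases i.eq_zero_or_pos with rfl | hi
  · simpa [pairWeight] using
      hB.integral_K_zero_mul_K_mul_le hH₁.ne' hm (by exact_mod_cast hij : (0 : ℝ) < j)
  · rw [pairWeight, if_neg hi.ne']
    exact hB.integral_K_mul_K_mul_le hH₁ hH₁' hm (by exact_mod_cast hi) hij'

lemma IsFBM.abs_integral_mul_fH_le (hB : IsFBM μ H₁ B) (hH₁ : 0 < H₁) (hH₁' : H₁ < 1)
    (hH₂ : 0 ≤ H₂) (hH₂' : H₂ ≤ 1) {m : ℝ} (hm : 0 < m) {i j : ℕ} (hij : i < j) :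
    |(∫ ω, K (m * B i ω) * K (m * B j ω) ∂μ) * fH H₂ i j| ≤
      pairWeight H₁ m i * ((j - i : ℕ) : ℝ) ^ (2 * H₂ - 2 - H₁) := by
  have hlag : (0 : ℝ) < (j : ℝ) - i := sub_pos.2 (by exact_mod_cast hij)
  have hweight := pairWeight_nonneg hm.le H₁ i
  calc |(∫ ω, K (m * B i ω) * K (m * B j ω) ∂μ) * fH H₂ i j|
      = (∫ ω, K (m * B i ω) * K (m * B j ω) ∂μ) * |fH H₂ i j| := by
        rw [abs_mul, abs_of_nonneg (integral_nonneg fun ω => mul_nonneg (K_nonneg _) (K_nonneg _))]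
    _ ≤ pairWeight H₁ m i * ((j : ℝ) - i) ^ (-H₁) * ((j : ℝ) - i) ^ (2 * H₂ - 2) :=
        mul_le_mul (hB.integral_K_mul_K_mul_le_pairWeight hH₁ hH₁' hm hij)
          (abs_fH_le hH₂ hH₂' hij) (abs_nonneg _) (mul_nonneg hweight (by positivity))
    _ = pairWeight H₁ m i * ((j - i : ℕ) : ℝ) ^ (2 * H₂ - 2 - H₁) := by
        rw [mul_assoc, ← rpow_add hlag, Nat.cast_sub hij.le]
        ring_nf

lemma IsFBM.abs_offDiagonalSum_le (hB : IsFBM μ H₁ B) (hH₁ : 0 < H₁) (hH₁' : H₁ < 1)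
    (hH₂ : 0 ≤ H₂) (hH₂' : H₂ ≤ 1) {δ : ℝ} (hδ₀ : 0 < δ) (hδ₁ : δ ≤ 1)
    (hδ : 2 * H₂ - 1 - H₁ ≤ δ) {m : ℝ} (hm : 0 < m) (n : ℕ) :
    |offDiagonalSum μ B H₂ m n| ≤
      2 * (((2 * π * m)⁻¹ + (π * √(1 - H₁) * m ^ 2)⁻¹ * ((n : ℝ) ^ (1 - H₁) / (1 - H₁))) *
        ((n : ℝ) ^ δ / δ)) := by
  have hsymm (i j : ℕ) : (∫ ω, K (m * B i ω) * K (m * B j ω) ∂μ) * fH H₂ i j =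
      (∫ ω, K (m * B j ω) * K (m * B i ω) ∂μ) * fH H₂ j i := by
    simp only [fH_comm H₂ i j, mul_comm (K (m * B i _))]
  have hlags : ∑ k ∈ Finset.Icc 1 n, (k : ℝ) ^ (2 * H₂ - 2 - H₁) ≤ (n : ℝ) ^ δ / δ := by
    refine (Finset.sum_le_sum fun k hk => ?_).trans (sum_Icc_rpow_le hδ₀ hδ₁ n)
    exact rpow_le_rpow_of_exponent_le (by exact_mod_cast (Finset.mem_Icc.1 hk).1) (by linarith)
  refine (abs_sum_range_offDiag_le (w := fun k => (k : ℝ) ^ (2 * H₂ - 2 - H₁)) hsymm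
    (pairWeight_nonneg hm.le H₁) (fun k => rpow_nonneg k.cast_nonneg _)
    (fun i j => hB.abs_integral_mul_fH_le hH₁ hH₁' hH₂ hH₂' hm) n).trans ?_
  have := sub_pos.2 hH₁'
  gcongr
  exact sum_pairWeight_le hH₁.le hH₁' hm.le n

lemma IsFBM.abs_rpow_mul_offDiagonalSum_le (hB : IsFBM μ H₁ B) (hH₁ : 0 < H₁) (hH₁' : H₁ < 1)
    (hH₂ : 0 ≤ H₂) (hH₂' : H₂ ≤ 1) {δ : ℝ} (hδ₀ : 0 < δ) (hδ₁ : δ ≤ 1)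
    (hδ : 2 * H₂ - 1 - H₁ ≤ δ) (α : ℝ) {n : ℕ} (hn : 0 < n) :
    |(n : ℝ) ^ (α + H₁ - 1) * offDiagonalSum μ B H₂ ((n : ℝ) ^ α) n| ≤
      (π * δ)⁻¹ * (n : ℝ) ^ (-(1 - H₁ - δ)) +
        2 * (π * √(1 - H₁) * (1 - H₁) * δ)⁻¹ * (n : ℝ) ^ (-(α - δ)) := by
  have hn₀ : (0 : ℝ) < n := by exact_mod_cast hn
  have hH : 0 < 1 - H₁ := sub_pos.2 hH₁'
  have hzero : (n : ℝ) ^ (-(1 - H₁ - δ)) =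
      (n : ℝ) ^ (α + H₁ - 1) * ((n : ℝ) ^ α)⁻¹ * (n : ℝ) ^ δ := by
    rw [← rpow_neg hn₀.le, ← rpow_add hn₀, ← rpow_add hn₀]
    ring_nf
  have hpos : (n : ℝ) ^ (-(α - δ)) =
      (n : ℝ) ^ (α + H₁ - 1) * (((n : ℝ) ^ α) ^ 2)⁻¹ * (n : ℝ) ^ (1 - H₁) * (n : ℝ) ^ δ := by
    rw [← rpow_two_mul hn₀.le, ← rpow_neg hn₀.le, ← rpow_add hn₀, ← rpow_add hn₀, ← rpow_add hn₀]
    ring_nf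
  rw [abs_mul, abs_of_pos (rpow_pos_of_pos hn₀ _)]
  refine (mul_le_mul_of_nonneg_left (hB.abs_offDiagonalSum_le hH₁ hH₁' hH₂ hH₂' hδ₀ hδ₁ hδ
    (rpow_pos_of_pos hn₀ α) n) (rpow_nonneg hn₀.le _)).trans_eq ?_
  rw [hzero, hpos]
  field_simp

theorem statement2_general (hH₁ : 0 < H₁) (hH₁' : H₁ < 1) (hH₂ : 0 < H₂) (hH₂' : H₂ < 1) {α : ℝ}
    (hα : 0 < α) (hcond : 2 * H₂ - 1 - H₁ < α) (hB : IsFBM μ H₁ B) :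
    Tendsto (fun n : ℕ => (n : ℝ) ^ (α + H₁ - 1) * offDiagonalSum μ B H₂ ((n : ℝ) ^ α) n)
      atTop (𝓝 0) := by
  -- The sum over lags is at most `n ^ δ / δ` as soon as `δ ≥ 2 * H₂ - 1 - H₁`, while the two terms
  -- of the resulting bound tend to zero when `δ < 1 - H₁` and `δ < α`.
  obtain ⟨δ, hδ, hδ'⟩ : ∃ δ, max 0 (2 * H₂ - 1 - H₁) < δ ∧ δ < min (1 - H₁) α :=
    exists_between <| max_lt (lt_min (by linarith) hα) (lt_min (by linarith) hcond)
  obtain ⟨hδ₀, hδlag⟩ := max_lt_iff.1 hδ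
  obtain ⟨hδH, hδα⟩ := lt_min_iff.1 hδ'
  have hdecay {p : ℝ} (hp : 0 < p) : Tendsto (fun n : ℕ => (n : ℝ) ^ (-p)) atTop (𝓝 0) :=
    (tendsto_rpow_neg_atTop hp).comp tendsto_natCast_atTop_atTop
  have hbound : Tendsto (fun n : ℕ => (π * δ)⁻¹ * (n : ℝ) ^ (-(1 - H₁ - δ)) +
      2 * (π * √(1 - H₁) * (1 - H₁) * δ)⁻¹ * (n : ℝ) ^ (-(α - δ))) atTop (𝓝 0) := by
    simpa using ((hdecay (sub_pos.2 hδH)).const_mul _).add ((hdecay (sub_pos.2 hδα)).const_mul _)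
  refine squeeze_zero_norm' ?_ hbound
  filter_upwards [eventually_gt_atTop 0] with n hn
  exact hB.abs_rpow_mul_offDiagonalSum_le hH₁ hH₁' hH₂.le hH₂'.le hδ₀ (by linarith) hδlag.le α hn

end Limit

theorem statement2
    {Ω : Type*} [MeasurableSpace Ω] (μ : Measure Ω) [IsProbabilityMeasure μ]
    (H₁ H₂ α : ℝ) (hH₁ : 0 < H₁) (hH₁' : H₁ < 1) (hH₂ : 0 < H₂) (hH₂' : H₂ < 1)
    (hα : 0 < α) (hcond : α - 4 * H₂ + H₁ + 2 > 0)
    (B : ℝ → Ω → ℝ) (hB : IsFBM μ H₁ B) :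
    Tendsto (fun n : ℕ =>
        (n : ℝ) ^ (α + H₁ - 1) *
          ∑ i ∈ Finset.range n, ∑ j ∈ Finset.range n,
            if i = j then 0 else
              (∫ ω, K ((n : ℝ) ^ α * B i ω) * K ((n : ℝ) ^ α * B j ω) ∂μ) * fH H₂ i j)
      atTop (𝓝 0) :=
  statement2_general hH₁ hH₁' hH₂ hH₂' hα
    (by rcases le_total H₂ (1 / 2) with _ | _ <;> linarith) hB
end

section
/- Let (X,Y) be a centered Gaussian random vector in ℝ² with E[X²] = a, E[Y²] = b and E[XY] = ρ, and assume ab − ρ² > 0. Then for every c > 0, E[K(cX) K(cY)] = (2π)^{−1} (c⁴(ab − ρ²) + c²(a + b) + 1)^{−1/2}. -/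
open MeasureTheory ProbabilityTheory Real

/-!
Since `‖x‖²` is rotation invariant, it can be computed in an orthonormal eigenbasis of the
covariance operator `Σ` of a centred Gaussian measure. There the coordinates are independent
Gaussians whose variances are the eigenvalues `λᵢ`, so the integral of `exp (-t‖x‖² / 2)` factors
as `∏ᵢ (1 + t λᵢ)^{-1/2} = det (1 + t Σ)^{-1/2}`. For a random vector this applies to the product
of the `K (c * X i)`, which depends on `‖X‖²` only, with `t = c²`.
-/

section InnerProductSpace

open scoped NNReal RealInnerProductSpace

lemma integral_exp_neg_mul_sq_gaussianReal (v : ℝ≥0) {t : ℝ} (htv : 0 < 1 + t * v) :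
    ∫ x, exp (-t * x ^ 2 / 2) ∂gaussianReal 0 v = (√(1 + t * v))⁻¹ := by
  rcases eq_or_ne v 0 with rfl | hv
  · simp
  have density_mul (x : ℝ) : gaussianPDFReal 0 v x • exp (-t * x ^ 2 / 2) =
      (√(2 * π * v))⁻¹ * exp (-((1 + t * v) / (2 * v)) * x ^ 2) := by
    rw [gaussianPDFReal, smul_eq_mul, mul_assoc, ← exp_add]
    congr 2
    field_simp
    ring
  have ratio : π / ((1 + t * v) / (2 * v)) = 2 * π * v / (1 + t * v) := by field_simp
  calc ∫ x, exp (-t * x ^ 2 / 2) ∂gaussianReal 0 v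
      = (√(2 * π * v))⁻¹ * √(2 * π * v / (1 + t * v)) := by
        simp_rw [integral_gaussianReal_eq_integral_smul hv, density_mul, integral_const_mul,
          integral_gaussian, ratio]
    _ = (√(1 + t * v))⁻¹ := by
        rw [sqrt_div (by positivity), inv_mul_eq_div, div_div_cancel_left' (by positivity)]

variable {E : Type*} [NormedAddCommGroup E] [InnerProductSpace ℝ E]

lemma det_one_add_smul_eq_prod_eigenvalues [FiniteDimensional ℝ E] {T : E →ₗ[ℝ] E}
    (hT : T.IsSymmetric) {n : ℕ} (hn : Module.finrank ℝ E = n) (t : ℝ) :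
    LinearMap.det (1 + t • T) = ∏ i, (1 + t * hT.eigenvalues hn i) := by
  rw [← LinearMap.det_toMatrix (hT.eigenvectorBasis hn).toBasis, map_add, map_smul,
    LinearMap.toMatrix_one, hT.toMatrix_eigenvectorBasis hn, ← Matrix.diagonal_one,
    ← Matrix.diagonal_smul, Matrix.diagonal_add, Matrix.det_diagonal]
  simp

variable [MeasurableSpace E] [BorelSpace E] {μ : Measure E}

lemma covariance_inner_of_integral_eq_zero [CompleteSpace E] [IsFiniteMeasure μ]
    (hμ : MemLp id 2 μ) (h0 : ∫ x, x ∂μ = 0) (u v : E) :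
    cov[fun x ↦ ⟪u, x⟫, fun x ↦ ⟪v, x⟫; μ] = ⟪covarianceOperator μ u, v⟫ := by
  have mean_inner (w : E) : ∫ x, ⟪w, x⟫ ∂μ = 0 := by
    rw [integral_inner (f := fun x ↦ x) (hμ.integrable one_le_two), h0, inner_zero_right]
  simp only [covariance, mean_inner, sub_zero, covarianceOperator_inner hμ]

variable [IsGaussian μ]

lemma map_inner_eq_gaussianReal [CompleteSpace E] [SecondCountableTopology E]
    (h0 : ∫ x, x ∂μ = 0) (u : E) :
    μ.map (fun x ↦ ⟪u, x⟫) = gaussianReal 0 ⟪covarianceOperator μ u, u⟫.toNNReal := by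
  have law := IsGaussian.map_eq_gaussianReal (μ := μ) (innerSL ℝ u)
  have hμ : MemLp id 2 μ := IsGaussian.memLp_two_id
  simp only [coe_innerSL_apply] at law
  rw [law, integral_inner (f := fun x ↦ x) (hμ.integrable one_le_two), h0, inner_zero_right,
    ← covariance_self (by fun_prop), covariance_inner_of_integral_eq_zero hμ h0]

lemma iIndepFun_inner_of_covarianceOperator [CompleteSpace E] [SecondCountableTopology E]
    {ι : Type*} [Finite ι] (h0 : ∫ x, x ∂μ = 0) {b : ι → E}
    (hb : Pairwise fun i j ↦ ⟪covarianceOperator μ (b i), b j⟫ = 0) :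
    iIndepFun (fun i x ↦ ⟪b i, x⟫) μ := by
  have := Fintype.ofFinite ι
  have joint : HasGaussianLaw (fun x i ↦ ⟪b i, x⟫) μ :=
    IsGaussian.hasGaussianLaw_id.map_fun (ContinuousLinearMap.pi fun i ↦ innerSL ℝ (b i))
  refine joint.iIndepFun_of_covariance_eq_zero fun i j hij ↦ ?_
  rw [covariance_inner_of_integral_eq_zero IsGaussian.memLp_two_id h0, hb hij]

theorem integral_exp_neg_mul_norm_sq_of_isGaussian [FiniteDimensional ℝ E]
    (h0 : ∫ x, x ∂μ = 0) {t : ℝ} (ht : 0 ≤ t) :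
    ∫ x, exp (-t * ‖x‖ ^ 2 / 2) ∂μ =
      (√(LinearMap.det (1 + t • (covarianceOperator μ).toLinearMap)))⁻¹ := by
  have hpos : (covarianceOperator μ).toLinearMap.IsPositive := isPositive_covarianceOperator
  let b := hpos.isSymmetric.eigenvectorBasis rfl
  let eig := hpos.isSymmetric.eigenvalues rfl
  have eig_nonneg (i) : 0 ≤ eig i := hpos.nonneg_eigenvalues rfl i
  have inner_eigenvectors (i j) :
      ⟪covarianceOperator μ (b i), b j⟫ = if i = j then eig i else 0 := by
    have : covarianceOperator μ (b i) = eig i • b i := hpos.isSymmetric.apply_eigenvectorBasis rfl i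
    rw [this, real_inner_smul_left, b.inner_eq_ite, mul_ite, mul_one, mul_zero]
  have coordinates_indep : iIndepFun (fun i x ↦ ⟪b i, x⟫) μ :=
    iIndepFun_inner_of_covarianceOperator h0 fun i j hij ↦
      (inner_eigenvectors i j).trans (if_neg hij)
  have integral_coordinate (i) :
      ∫ x, exp (-t * ⟪b i, x⟫ ^ 2 / 2) ∂μ = (√(1 + t * eig i))⁻¹ := by
    rw [← integral_map (f := fun y ↦ exp (-t * y ^ 2 / 2)) (by fun_prop) (by fun_prop),
      map_inner_eq_gaussianReal h0, inner_eigenvectors, if_pos rfl,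
      integral_exp_neg_mul_sq_gaussianReal, coe_toNNReal _ (eig_nonneg i)]
    positivity
  calc ∫ x, exp (-t * ‖x‖ ^ 2 / 2) ∂μ
      = ∫ x, ∏ i, exp (-t * ⟪b i, x⟫ ^ 2 / 2) ∂μ := by
        simp_rw [← exp_sum, ← Finset.sum_div, ← Finset.mul_sum, b.sum_sq_inner_right]
    _ = ∏ i, (√(1 + t * eig i))⁻¹ := by
        rw [coordinates_indep.integral_fun_prod_comp (f := fun _ y ↦ exp (-t * y ^ 2 / 2))
          (by fun_prop) (by fun_prop)]
        simp_rw [integral_coordinate]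
    _ = (√(LinearMap.det (1 + t • (covarianceOperator μ).toLinearMap)))⁻¹ := by
        rw [Finset.prod_inv_distrib, det_one_add_smul_eq_prod_eigenvalues hpos.isSymmetric rfl,
          sqrt_prod _ fun i _ ↦ add_nonneg zero_le_one (mul_nonneg ht (eig_nonneg i))]

end InnerProductSpace

section RandomVector

variable {Ω : Type*} {mΩ : MeasurableSpace Ω} {P : Measure Ω} {ι : Type*}

lemma hasGaussianLaw_pi_of_forall_sum_mul [Fintype ι] {X : ι → Ω → ℝ}
    (h : ∀ w : ι → ℝ, HasGaussianLaw (fun ω ↦ ∑ i, w i * X i ω) P) :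
    HasGaussianLaw (fun ω i ↦ X i ω) P := by
  classical
  have hX : AEMeasurable (fun ω i ↦ X i ω) P := aemeasurable_pi_lambda _ fun i ↦ by
    simpa [Pi.single_apply] using (h (Pi.single i 1)).aemeasurable
  refine ⟨isGaussian_of_isGaussian_map fun L ↦ ?_⟩
  have comp_eq_sum : L ∘ (fun ω i ↦ X i ω) = fun ω ↦ ∑ i, L (Pi.single i 1) * X i ω := by
    funext ω
    simp_rw [Function.comp_apply, mul_comm (L _), ← smul_eq_mul, ← map_smul, ← map_sum,
      ← Pi.single_smul, smul_eq_mul, mul_one, Finset.univ_sum_single]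
  rw [AEMeasurable.map_map_of_aemeasurable (by fun_prop) hX, comp_eq_sum]
  exact (h _).isGaussian_map

/-- The matrix `E[Xᵢ Xⱼ]` of a family of real random variables; for centred variables this is
their covariance matrix. -/
noncomputable def secondMomentMatrix (X : ι → Ω → ℝ) (P : Measure Ω) : Matrix ι ι ℝ :=
  Matrix.of fun i j ↦ ∫ ω, X i ω * X j ω ∂P

lemma toMatrix_covarianceOperator_map [Fintype ι] [DecidableEq ι] {X : ι → Ω → ℝ}
    (hX : ∀ i, MemLp (X i) 2 P) :
    (covarianceOperator (P.map fun ω ↦ WithLp.toLp 2 (X · ω))).toLinearMap.toMatrix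
        (EuclideanSpace.basisFun ι ℝ).toBasis (EuclideanSpace.basisFun ι ℝ).toBasis =
      secondMomentMatrix X P := by
  have aemeas (i) : AEMeasurable (X i) P := (hX i).aemeasurable
  have aemeas_toLp : AEMeasurable (fun ω ↦ WithLp.toLp 2 (X · ω)) P := by fun_prop
  have memLp_id : MemLp id 2 (P.map fun ω ↦ WithLp.toLp 2 (X · ω)) := by
    rw [memLp_map_measure_iff (by fun_prop) aemeas_toLp]
    exact MemLp.of_eval_piLp hX
  ext i j
  rw [LinearMap.toMatrix_apply, OrthonormalBasis.coe_toBasis_repr_apply,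
    OrthonormalBasis.repr_apply_apply, OrthonormalBasis.coe_toBasis,
    ContinuousLinearMap.coe_coe, real_inner_comm, covarianceOperator_inner memLp_id,
    integral_map aemeas_toLp (by fun_prop)]
  simp [secondMomentMatrix, EuclideanSpace.inner_single_left, mul_comm]

lemma det_one_add_smul_covarianceOperator_map [Fintype ι] [DecidableEq ι] {X : ι → Ω → ℝ}
    (hX : ∀ i, MemLp (X i) 2 P) (t : ℝ) :
    LinearMap.det
        (1 + t • (covarianceOperator (P.map fun ω ↦ WithLp.toLp 2 (X · ω))).toLinearMap) =
      (1 + t • secondMomentMatrix X P).det := by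
  rw [← LinearMap.det_toMatrix (EuclideanSpace.basisFun ι ℝ).toBasis, map_add, map_smul,
    LinearMap.toMatrix_one, toMatrix_covarianceOperator_map hX]

theorem integral_exp_neg_mul_sum_sq [Fintype ι] [DecidableEq ι] {X : ι → Ω → ℝ}
    (hX : HasGaussianLaw (fun ω i ↦ X i ω) P) (h0 : ∀ i, ∫ ω, X i ω ∂P = 0)
    {t : ℝ} (ht : 0 ≤ t) :
    ∫ ω, exp (-t * (∑ i, X i ω ^ 2) / 2) ∂P =
      (√(1 + t • secondMomentMatrix X P).det)⁻¹ := by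
  have hV : HasGaussianLaw (fun ω ↦ WithLp.toLp 2 (X · ω)) P := hX.toLp_pi 2
  have := hV.isGaussian_map
  have mean_zero : ∫ x, x ∂P.map (fun ω ↦ WithLp.toLp 2 (X · ω)) = 0 := by
    rw [integral_map hV.aemeasurable (by fun_prop)]
    ext i
    rw [eval_integral_piLp fun i ↦ (hX.eval i).integrable]
    simpa using h0 i
  rw [← det_one_add_smul_covarianceOperator_map fun i ↦ (hX.eval i).memLp_two,
    ← integral_exp_neg_mul_norm_sq_of_isGaussian mean_zero ht,
    integral_map hV.aemeasurable (by fun_prop)]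
  simp_rw [EuclideanSpace.real_norm_sq_eq]

lemma prod_K_mul [Fintype ι] (c : ℝ) (x : ι → ℝ) :
    ∏ i, K (c * x i) = (√(2 * π))⁻¹ ^ Fintype.card ι * exp (-c ^ 2 * (∑ i, x i ^ 2) / 2) := by
  simp_rw [K, Finset.prod_mul_distrib, Finset.prod_const, Finset.card_univ, ← exp_sum,
    mul_pow, ← Finset.sum_div, Finset.sum_neg_distrib, ← Finset.mul_sum, neg_mul]

theorem integral_prod_K_mul [Fintype ι] [DecidableEq ι] {X : ι → Ω → ℝ}
    (hX : HasGaussianLaw (fun ω i ↦ X i ω) P) (h0 : ∀ i, ∫ ω, X i ω ∂P = 0) (c : ℝ) :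
    ∫ ω, ∏ i, K (c * X i ω) ∂P = (√(2 * π))⁻¹ ^ Fintype.card ι *
      (√(1 + c ^ 2 • secondMomentMatrix X P).det)⁻¹ := by
  simp_rw [prod_K_mul, integral_const_mul, integral_exp_neg_mul_sum_sq hX h0 (sq_nonneg c)]

lemma det_one_add_smul_secondMomentMatrix_pair (X Y : Ω → ℝ) (t : ℝ) :
    (1 + t • secondMomentMatrix ![X, Y] P).det =
      t ^ 2 * ((∫ ω, X ω ^ 2 ∂P) * (∫ ω, Y ω ^ 2 ∂P) - (∫ ω, X ω * Y ω ∂P) ^ 2) +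
        t * ((∫ ω, X ω ^ 2 ∂P) + ∫ ω, Y ω ^ 2 ∂P) + 1 := by
  have moment_comm : ∫ ω, Y ω * X ω ∂P = ∫ ω, X ω * Y ω ∂P := by simp_rw [mul_comm]
  simp only [secondMomentMatrix, Matrix.det_fin_two, Matrix.add_apply, Matrix.smul_apply,
    Matrix.of_apply, Matrix.one_apply_eq, Matrix.cons_val_zero, Matrix.cons_val_one, ← sq,
    smul_eq_mul, moment_comm, Matrix.one_apply_ne zero_ne_one, Matrix.one_apply_ne one_ne_zero]
  ring

end RandomVector

theorem statement7_general {Ω : Type*} [MeasurableSpace Ω] (μ : Measure Ω) (X Y : Ω → ℝ)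
    (a b ρ : ℝ)
    (hgauss : ∀ u v : ℝ, ∃ σ2 : NNReal,
      μ.map (fun ω => u * X ω + v * Y ω) = gaussianReal 0 σ2)
    (ha : ∫ ω, X ω ^ 2 ∂μ = a) (hb : ∫ ω, Y ω ^ 2 ∂μ = b)
    (hρ : ∫ ω, X ω * Y ω ∂μ = ρ) (c : ℝ) :
    ∫ ω, K (c * X ω) * K (c * Y ω) ∂μ =
      (2 * π)⁻¹ * (√(c ^ 4 * (a * b - ρ ^ 2) + c ^ 2 * (a + b) + 1))⁻¹ := by
  have combination_law (u v : ℝ) :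
      ∃ σ2, HasLaw (fun ω ↦ u * X ω + v * Y ω) (gaussianReal 0 σ2) μ := by
    obtain ⟨σ2, h⟩ := hgauss u v
    exact ⟨σ2, .of_map_ne_zero (h ▸ IsProbabilityMeasure.ne_zero _), h⟩
  have combination_mean (u v : ℝ) : ∫ ω, u * X ω + v * Y ω ∂μ = 0 := by
    obtain ⟨σ2, h⟩ := combination_law u v
    exact h.integral_eq.trans integral_id_gaussianReal
  have joint_law : HasGaussianLaw (fun ω i ↦ ![X, Y] i ω) μ :=
    hasGaussianLaw_pi_of_forall_sum_mul fun w ↦ by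
      simpa using (combination_law (w 0) (w 1)).choose_spec.hasGaussianLaw
  have means_zero (i) : ∫ ω, ![X, Y] i ω ∂μ = 0 := by
    fin_cases i
    · simpa using combination_mean 1 0
    · simpa using combination_mean 0 1
  have sqrt_two_pi_sq : (√(2 * π))⁻¹ ^ 2 = (2 * π)⁻¹ := by
    rw [inv_pow, sq_sqrt (by positivity)]
  calc ∫ ω, K (c * X ω) * K (c * Y ω) ∂μ
      = ∫ ω, ∏ i, K (c * ![X, Y] i ω) ∂μ := by simp [Fin.prod_univ_two]
    _ = (2 * π)⁻¹ * (√(c ^ 4 * (a * b - ρ ^ 2) + c ^ 2 * (a + b) + 1))⁻¹ := by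
        rw [integral_prod_K_mul joint_law means_zero, det_one_add_smul_secondMomentMatrix_pair,
          ha, hb, hρ, Fintype.card_fin, sqrt_two_pi_sq, ← pow_mul]

theorem statement7
    {Ω : Type*} [MeasurableSpace Ω] (μ : Measure Ω) [IsProbabilityMeasure μ]
    (X Y : Ω → ℝ) (hX : Measurable X) (hY : Measurable Y)
    (a b ρ : ℝ)
    (hgauss : ∀ u v : ℝ, ∃ σ2 : NNReal,
      μ.map (fun ω => u * X ω + v * Y ω) = gaussianReal 0 σ2)
    (ha : ∫ ω, X ω ^ 2 ∂μ = a) (hb : ∫ ω, Y ω ^ 2 ∂μ = b)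
    (hρ : ∫ ω, X ω * Y ω ∂μ = ρ) (hdet : 0 < a * b - ρ ^ 2) :
    ∀ c : ℝ, 0 < c →
      ∫ ω, K (c * X ω) * K (c * Y ω) ∂μ =
        (2 * Real.pi)⁻¹ *
          (Real.sqrt (c ^ 4 * (a * b - ρ ^ 2) + c ^ 2 * (a + b) + 1))⁻¹ :=
  fun c _ ↦ statement7_general μ X Y a b ρ hgauss ha hb hρ c
end

section
/- Let 1/2 < H < 1. There exists a constant c(H) > 0, depending only on H, such that for every integer m ≥ 1 and every integer n ≥ 2, n^{−2} Σ_{1≤j<i≤n−1} R_H(i/n, j/n)^{2m} (i/n)^{−H(2m+1)} (j/n)^{−H(2m+1)} ≤ c(H) m^{−1/(2H)}. -/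
open MeasureTheory Filter Topology Real

/-!
The normalized covariance `RH H t s / (t ^ H * s ^ H)` is at most `exp (-δ * (1 - s / t) ^ (2 * H))`
for some `δ > 0` depending only on `H`, so each summand is at most
`t ^ (-H) * s ^ (-H) * exp (-2 * δ * m * (1 - s / t) ^ (2 * H))` with `t = i / n`, `s = j / n`.
For `j ≥ i / 2` the weight `s ^ (-H)` is comparable to `t ^ (-H)`, and comparing the remaining sum
with `∫ exp (-b * x ^ p) = b ^ (-1 / p) * Γ (1 / p + 1)`, where `p = 2 * H`, yields the factor
`m ^ (-1 / (2 * H))`. For `j ≤ i / 2` the exponential is at most `exp (-2 * δ * m * 2⁻¹ ^ (2 * H))`,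
which decays even faster in `m`, and the weights `j ^ (-H)` with `j < i` sum to at most order
`i ^ (1 - H)`.
-/

section PowerSums

variable {a b p : ℝ}

theorem one_sub_mul_rpow_neg_le_rpow_sub_rpow (ha₀ : 0 ≤ a) (ha₁ : a ≤ 1) {x : ℝ} (hx : 1 ≤ x) :
    (1 - a) * x ^ (-a) ≤ x ^ (1 - a) - (x - 1) ^ (1 - a) := by
  have hx₀ : 0 < x := by linarith
  have bernoulli : (1 + -x⁻¹) ^ (1 - a) ≤ 1 + (1 - a) * -x⁻¹ :=
    rpow_one_add_le_one_add_mul_self (neg_le_neg (inv_le_one_of_one_le₀ hx))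
      (by linarith) (by linarith)
  have hsub : x - 1 = x * (1 + -x⁻¹) := by field_simp; ring
  have hpow : x ^ (1 - a) = x ^ (-a) * x := by
    rw [← Real.rpow_add_one hx₀.ne', neg_add_eq_sub]
  calc (1 - a) * x ^ (-a) = x ^ (1 - a) - x ^ (1 - a) * (1 + (1 - a) * -x⁻¹) := by
        rw [hpow]; field_simp; ring
    _ ≤ x ^ (1 - a) - x ^ (1 - a) * (1 + -x⁻¹) ^ (1 - a) := by gcongr
    _ = x ^ (1 - a) - (x - 1) ^ (1 - a) := by
        rw [hsub, Real.mul_rpow hx₀.le]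
        linarith [inv_le_one_of_one_le₀ hx]

theorem sum_Ico_one_rpow_neg_le (ha₀ : 0 ≤ a) (ha₁ : a < 1) (n : ℕ) :
    ∑ j ∈ Finset.Ico 1 n, (j : ℝ) ^ (-a) ≤ (n : ℝ) ^ (1 - a) / (1 - a) := by
  have ha : 0 < 1 - a := by linarith
  rw [le_div_iff₀' ha, Finset.mul_sum, Finset.sum_Ico_eq_sum_range]
  simp only [add_comm 1]
  calc ∑ k ∈ Finset.range (n - 1), (1 - a) * ((k + 1 : ℕ) : ℝ) ^ (-a)
      ≤ ∑ k ∈ Finset.range (n - 1), (((k + 1 : ℕ) : ℝ) ^ (1 - a) - (k : ℝ) ^ (1 - a)) := by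
        refine Finset.sum_le_sum fun k _ ↦ ?_
        have h := one_sub_mul_rpow_neg_le_rpow_sub_rpow ha₀ ha₁.le (x := (k + 1 : ℕ)) (by simp)
        rwa [Nat.cast_succ, add_sub_cancel_right, ← Nat.cast_succ] at h
    _ = ((n - 1 : ℕ) : ℝ) ^ (1 - a) := by
        rw [Finset.sum_range_sub fun k : ℕ ↦ (k : ℝ) ^ (1 - a), Nat.cast_zero,
          Real.zero_rpow ha.ne', sub_zero]
    _ ≤ (n : ℝ) ^ (1 - a) := by gcongr; exact Nat.sub_le n 1

theorem antitoneOn_exp_neg_mul_rpow (hb : 0 ≤ b) (hp : 0 ≤ p) :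
    AntitoneOn (fun x : ℝ ↦ exp (-b * x ^ p)) (Set.Ici 0) := by
  intro x hx y _ hxy
  simp only [neg_mul]
  gcongr

theorem sum_range_exp_neg_mul_rpow_le (hb : 0 < b) (hp : 0 < p) (N : ℕ) :
    ∑ k ∈ Finset.range N, exp (-b * ((k + 1 : ℕ) : ℝ) ^ p) ≤
      b ^ (-1 / p) * Real.Gamma (1 / p + 1) := by
  have hanti := antitoneOn_exp_neg_mul_rpow hb.le hp.le
  have hint : IntegrableOn (fun x : ℝ ↦ exp (-b * x ^ p)) (Set.Ioi 0) := by
    simpa using integrableOn_rpow_mul_exp_neg_mul_rpow (s := 0) (by norm_num) hp hb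
  calc ∑ k ∈ Finset.range N, exp (-b * ((k + 1 : ℕ) : ℝ) ^ p)
      ≤ ∫ x in (0 : ℝ)..N, exp (-b * x ^ p) := by
        simpa using (hanti.mono fun x hx ↦ hx.1).sum_le_integral (x₀ := 0) (a := N)
    _ = ∫ x in Set.Ioc (0 : ℝ) N, exp (-b * x ^ p) :=
        intervalIntegral.integral_of_le N.cast_nonneg
    _ ≤ ∫ x in Set.Ioi (0 : ℝ), exp (-b * x ^ p) :=
        setIntegral_mono_set hint (.of_forall fun x ↦ (exp_pos _).le)
          Set.Ioc_subset_Ioi_self.eventuallyLE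
    _ = b ^ (-1 / p) * Real.Gamma (1 / p + 1) := integral_exp_neg_mul_rpow hp hb

theorem exp_neg_le_rpow_mul_Gamma (hb : 0 < b) (hp : 0 < p) :
    exp (-b) ≤ b ^ (-1 / p) * Real.Gamma (1 / p + 1) := by
  simpa using sum_range_exp_neg_mul_rpow_le hb hp 1

theorem mul_rpow_rpow_neg_one_div {c : ℝ} (hb : 0 ≤ b) (hc : 0 ≤ c) (hp : p ≠ 0) :
    (b * c ^ p) ^ (-1 / p) = b ^ (-1 / p) * c⁻¹ := by
  rw [Real.mul_rpow hb (by positivity), ← Real.rpow_mul hc, mul_div_cancel₀ _ hp,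
    Real.rpow_neg_one]

theorem sum_Ico_exp_neg_mul_one_sub_div_rpow_le (hb : 0 < b) (hp : 0 < p) (i : ℕ) :
    ∑ j ∈ Finset.Ico 1 i, exp (-b * (1 - (j : ℝ) / i) ^ p) ≤
      i * (b ^ (-1 / p) * Real.Gamma (1 / p + 1)) := by
  rcases i.eq_zero_or_pos with rfl | hi
  · simp
  have hi₀ : (0 : ℝ) < i := by exact_mod_cast hi
  have hterm : ∀ j ∈ Finset.Ico 1 i, exp (-b * (1 - (j : ℝ) / i) ^ p) =
      exp (-(b * (i : ℝ)⁻¹ ^ p) * ((i - j : ℕ) : ℝ) ^ p) := fun j hj ↦ by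
    have hji := (Finset.mem_Ico.1 hj).2.le
    rw [neg_mul, neg_mul, mul_assoc, ← Real.mul_rpow (by positivity) (by positivity),
      Nat.cast_sub hji, mul_sub, inv_mul_cancel₀ hi₀.ne', inv_mul_eq_div]
  calc ∑ j ∈ Finset.Ico 1 i, exp (-b * (1 - (j : ℝ) / i) ^ p)
      = ∑ k ∈ Finset.range (i - 1), exp (-(b * (i : ℝ)⁻¹ ^ p) * ((k + 1 : ℕ) : ℝ) ^ p) := by
        rw [Finset.sum_congr rfl hterm,
          Finset.sum_Ico_reflect (fun k : ℕ ↦ exp (-(b * (i : ℝ)⁻¹ ^ p) * (k : ℝ) ^ p)) 1 i.le_succ]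
        simp [Finset.sum_Ico_eq_sum_range, add_comm]
    _ ≤ (b * (i : ℝ)⁻¹ ^ p) ^ (-1 / p) * Real.Gamma (1 / p + 1) :=
        sum_range_exp_neg_mul_rpow_le (by positivity) hp _
    _ = i * (b ^ (-1 / p) * Real.Gamma (1 / p + 1)) := by
        rw [mul_rpow_rpow_neg_one_div hb.le (by positivity) hp.ne', inv_inv]
        ring

theorem rpow_neg_mul_exp_le_add (ha : 0 ≤ a) (hb : 0 ≤ b) (hp : 0 ≤ p) {s t : ℝ} (hs : 0 < s)
    (ht : 0 < t) :
    s ^ (-a) * exp (-b * (1 - s / t) ^ p) ≤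
      2 ^ a * t ^ (-a) * exp (-b * (1 - s / t) ^ p) + exp (-(b * 2⁻¹ ^ p)) * s ^ (-a) := by
  rcases le_total t (2 * s) with hnear | hfar
  · have hweight : s ^ (-a) ≤ 2 ^ a * t ^ (-a) := by
      calc s ^ (-a) ≤ (t / 2) ^ (-a) :=
            Real.rpow_le_rpow_of_nonpos (by positivity) (by linarith) (by linarith)
        _ = 2 ^ a * t ^ (-a) := by
            rw [Real.div_rpow ht.le two_pos.le, Real.rpow_neg two_pos.le, div_inv_eq_mul, mul_comm]
    exact (mul_le_mul_of_nonneg_right hweight (exp_pos _).le).trans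
      (le_add_of_nonneg_right (by positivity))
  · have hhalf : 2⁻¹ ≤ 1 - s / t := by
      have : s / t ≤ 2⁻¹ := by rw [div_le_iff₀ ht]; linarith
      linarith
    have hexp : exp (-b * (1 - s / t) ^ p) ≤ exp (-(b * 2⁻¹ ^ p)) := by
      rw [neg_mul]; gcongr
    rw [mul_comm]
    exact (mul_le_mul_of_nonneg_right hexp (by positivity)).trans
      (le_add_of_nonneg_left (by positivity))

theorem sum_Ico_rpow_neg_mul_exp_le (ha₀ : 0 ≤ a) (ha₁ : a < 1) (hb : 0 < b) (hp : 0 < p) {i : ℕ}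
    (hi : i ≠ 0) :
    ∑ j ∈ Finset.Ico 1 i, (j : ℝ) ^ (-a) * exp (-b * (1 - (j : ℝ) / i) ^ p) ≤
      (2 ^ a + 2 / (1 - a)) * Real.Gamma (1 / p + 1) * b ^ (-1 / p) * (i : ℝ) ^ (1 - a) := by
  have hi₀ : (0 : ℝ) < i := by positivity
  have hsplit : ∀ j ∈ Finset.Ico 1 i, (j : ℝ) ^ (-a) * exp (-b * (1 - (j : ℝ) / i) ^ p) ≤
      2 ^ a * (i : ℝ) ^ (-a) * exp (-b * (1 - (j : ℝ) / i) ^ p) +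
        exp (-(b * 2⁻¹ ^ p)) * (j : ℝ) ^ (-a) := fun j hj ↦
    rpow_neg_mul_exp_le_add ha₀ hb.le hp.le (Nat.cast_pos.2 (Finset.mem_Ico.1 hj).1) hi₀
  have hfar : exp (-(b * 2⁻¹ ^ p)) ≤ 2 * b ^ (-1 / p) * Real.Gamma (1 / p + 1) := by
    have h := exp_neg_le_rpow_mul_Gamma (b := b * 2⁻¹ ^ p) (by positivity) hp
    rwa [mul_rpow_rpow_neg_one_div hb.le (by norm_num) hp.ne', inv_inv, mul_comm _ 2] at h
  have hpow : (i : ℝ) ^ (1 - a) = (i : ℝ) ^ (-a) * i := by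
    rw [← Real.rpow_add_one hi₀.ne', neg_add_eq_sub]
  calc ∑ j ∈ Finset.Ico 1 i, (j : ℝ) ^ (-a) * exp (-b * (1 - (j : ℝ) / i) ^ p)
      ≤ 2 ^ a * (i : ℝ) ^ (-a) * ∑ j ∈ Finset.Ico 1 i, exp (-b * (1 - (j : ℝ) / i) ^ p) +
          exp (-(b * 2⁻¹ ^ p)) * ∑ j ∈ Finset.Ico 1 i, (j : ℝ) ^ (-a) := by
        rw [Finset.mul_sum, Finset.mul_sum, ← Finset.sum_add_distrib]
        exact Finset.sum_le_sum hsplit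
    _ ≤ 2 ^ a * (i : ℝ) ^ (-a) * (i * (b ^ (-1 / p) * Real.Gamma (1 / p + 1))) +
          2 * b ^ (-1 / p) * Real.Gamma (1 / p + 1) * ((i : ℝ) ^ (1 - a) / (1 - a)) := by
        gcongr
        · exact sum_Ico_exp_neg_mul_one_sub_div_rpow_le hb hp i
        · exact sum_Ico_one_rpow_neg_le ha₀ ha₁ i
    _ = (2 ^ a + 2 / (1 - a)) * Real.Gamma (1 / p + 1) * b ^ (-1 / p) * (i : ℝ) ^ (1 - a) := by
        rw [hpow]; ring

theorem sum_sum_rpow_neg_mul_rpow_neg_mul_exp_le (ha₀ : 0 ≤ a) (ha₁ : a < 1) (hb : 0 < b)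
    (hp : 0 < p) (n : ℕ) :
    ∑ i ∈ Finset.Ico 1 n, ∑ j ∈ Finset.Ico 1 i,
        (i : ℝ) ^ (-a) * (j : ℝ) ^ (-a) * exp (-b * (1 - (j : ℝ) / i) ^ p) ≤
      (2 ^ a + 2 / (1 - a)) / (1 - a) * Real.Gamma (1 / p + 1) * b ^ (-1 / p) *
        ((n : ℝ) ^ (1 - a)) ^ 2 := by
  have : 0 < 1 - a := by linarith
  set C := (2 ^ a + 2 / (1 - a)) * Real.Gamma (1 / p + 1) * b ^ (-1 / p) with hC
  have : 0 ≤ C := by positivity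
  calc ∑ i ∈ Finset.Ico 1 n, ∑ j ∈ Finset.Ico 1 i,
        (i : ℝ) ^ (-a) * (j : ℝ) ^ (-a) * exp (-b * (1 - (j : ℝ) / i) ^ p)
      ≤ ∑ i ∈ Finset.Ico 1 n, (i : ℝ) ^ (-a) * (C * (n : ℝ) ^ (1 - a)) := by
        refine Finset.sum_le_sum fun i hi ↦ ?_
        obtain ⟨hi₁, hin⟩ := Finset.mem_Ico.1 hi
        simp only [mul_assoc _ (_ ^ (-a)), ← Finset.mul_sum]
        gcongr
        refine (sum_Ico_rpow_neg_mul_exp_le ha₀ ha₁ hb hp (by omega)).trans ?_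
        gcongr
    _ ≤ (n : ℝ) ^ (1 - a) / (1 - a) * (C * (n : ℝ) ^ (1 - a)) := by
        rw [← Finset.sum_mul]
        gcongr
        exact sum_Ico_one_rpow_neg_le ha₀ ha₁ n
    _ = _ := by rw [hC]; ring

end PowerSums

section Covariance

/-- A constant `δ` for which the correlation `RH H t s / (t ^ H * s ^ H)`, `s ≤ t`, falls short of
`1` by at least `δ * (1 - s / t) ^ (2 * H)`. -/
noncomputable def correlationGap (H : ℝ) : ℝ := (1 - 2 ^ (H - 1)) / 2

variable {H t s x : ℝ}

theorem correlationGap_nonneg (hH : H ≤ 1) : 0 ≤ correlationGap H := by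
  have := Real.rpow_le_one_of_one_le_of_nonpos one_le_two (sub_nonpos.2 hH)
  unfold correlationGap
  linarith

theorem correlationGap_pos (hH : H < 1) : 0 < correlationGap H := by
  have := Real.rpow_lt_one_of_one_lt_of_neg one_lt_two (sub_neg.2 hH)
  unfold correlationGap
  linarith

theorem two_mul_correlationGap_mul_le_of_le_half (hH₀ : 0 ≤ H) (hH₁ : H ≤ 1) (hx₀ : 0 ≤ x)
    (hx : x ≤ 2⁻¹) :
    2 * correlationGap H * (x ^ H * (1 - x) ^ H) ≤ x ^ H + (1 - x) ^ H - 1 := by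
  have hle_one : (1 - x) ^ H ≤ 1 := Real.rpow_le_one (by linarith) (by linarith) hH₀
  have hself_le : 1 - x ≤ (1 - x) ^ H :=
    Real.self_le_rpow_of_le_one (by linarith) (by linarith) hH₁
  have hx_le : x ≤ x ^ H * 2 ^ (H - 1) := by
    calc x = x ^ H * x ^ (1 - H) := by
          rw [← Real.rpow_add_of_nonneg hx₀ hH₀ (by linarith), add_sub_cancel, Real.rpow_one]
      _ ≤ x ^ H * 2⁻¹ ^ (1 - H) := by gcongr
      _ = x ^ H * 2 ^ (H - 1) := by
          rw [Real.inv_rpow two_pos.le, ← Real.rpow_neg two_pos.le, neg_sub]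
  calc 2 * correlationGap H * (x ^ H * (1 - x) ^ H)
      ≤ 2 * correlationGap H * (x ^ H * 1) := by
        have := correlationGap_nonneg hH₁
        gcongr
    _ = x ^ H - x ^ H * 2 ^ (H - 1) := by unfold correlationGap; ring
    _ ≤ x ^ H + (1 - x) ^ H - 1 := by linarith

theorem two_mul_correlationGap_mul_le (hH₀ : 0 ≤ H) (hH₁ : H ≤ 1) (hx₀ : 0 ≤ x) (hx₁ : x ≤ 1) :
    2 * correlationGap H * (x ^ H * (1 - x) ^ H) ≤ x ^ H + (1 - x) ^ H - 1 := by
  rcases le_total x 2⁻¹ with hx | hx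
  · exact two_mul_correlationGap_mul_le_of_le_half hH₀ hH₁ hx₀ hx
  · have h := two_mul_correlationGap_mul_le_of_le_half (x := 1 - x) hH₀ hH₁ (by linarith)
      (by linarith)
    rw [sub_sub_cancel] at h
    linarith

theorem RH_mul_mul {c : ℝ} (hc : 0 ≤ c) (ht : 0 ≤ t) (hs : 0 ≤ s) :
    RH H (c * t) (c * s) = c ^ (2 * H) * RH H t s := by
  unfold RH
  rw [← mul_sub, abs_mul, abs_of_nonneg hc, Real.mul_rpow hc ht, Real.mul_rpow hc hs,
    Real.mul_rpow hc (abs_nonneg _)]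
  ring

theorem RH_nonneg (hH : 0 ≤ H) (ht : 0 ≤ t) (hs : 0 ≤ s) : 0 ≤ RH H t s := by
  have hmax : |t - s| ^ (2 * H) ≤ max t s ^ (2 * H) := by
    gcongr
    exact abs_sub_le_of_nonneg_of_le ht (le_max_left t s) hs (le_max_right t s)
  have hsum : max t s ^ (2 * H) ≤ t ^ (2 * H) + s ^ (2 * H) := by
    rcases max_choice t s with h | h <;> rw [h]
    · exact le_add_of_nonneg_right (by positivity)
    · exact le_add_of_nonneg_left (by positivity)
  unfold RH
  linarith

theorem RH_one_le (hH₀ : 0 ≤ H) (hH₁ : H ≤ 1) (hx₀ : 0 ≤ x) (hx₁ : x ≤ 1) :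
    RH H 1 x ≤ x ^ H * (1 - correlationGap H * (1 - x) ^ (2 * H)) := by
  have hy₀ : 0 ≤ 1 - x := by linarith
  have hgap := two_mul_correlationGap_mul_le hH₀ hH₁ hx₀ hx₁
  have hxH : x ^ H ≤ 1 := Real.rpow_le_one hx₀ hx₁ hH₀
  have hyH : 0 ≤ (1 - x) ^ H := by positivity
  have hδ := correlationGap_nonneg hH₁
  have hprod : 2 * correlationGap H * (x ^ H * (1 - x) ^ H) * (1 - x) ^ H ≤
      (x ^ H + (1 - x) ^ H - 1) * ((1 - x) ^ H + 1 - x ^ H) :=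
    mul_le_mul hgap (by linarith) hyH (le_trans (by positivity) hgap)
  rw [RH, abs_of_nonneg hy₀, Real.one_rpow, two_mul, Real.rpow_add_of_nonneg hx₀ hH₀ hH₀,
    Real.rpow_add_of_nonneg hy₀ hH₀ hH₀]
  linarith

theorem RH_le_mul_exp (hH₀ : 0 ≤ H) (hH₁ : H ≤ 1) (ht : 0 < t) (hs : 0 ≤ s) (hst : s ≤ t) :
    RH H t s ≤ t ^ H * s ^ H * exp (-correlationGap H * (1 - s / t) ^ (2 * H)) := by
  calc RH H t s = t ^ (2 * H) * RH H 1 (s / t) := by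
        rw [← RH_mul_mul ht.le zero_le_one (by positivity), mul_one, mul_div_cancel₀ _ ht.ne']
    _ ≤ t ^ (2 * H) * ((s / t) ^ H * (1 - correlationGap H * (1 - s / t) ^ (2 * H))) := by
        gcongr
        exact RH_one_le hH₀ hH₁ (by positivity) (div_le_one_of_le₀ hst ht.le)
    _ = t ^ H * s ^ H * (1 - correlationGap H * (1 - s / t) ^ (2 * H)) := by
        rw [Real.div_rpow hs ht.le, two_mul, Real.rpow_add ht]
        field_simp
    _ ≤ t ^ H * s ^ H * exp (-correlationGap H * (1 - s / t) ^ (2 * H)) := by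
        gcongr
        rw [neg_mul]
        exact Real.one_sub_le_exp_neg _

theorem rpow_pow_two_mul_mul_rpow_neg (hx : 0 < x) (m : ℕ) :
    (x ^ H) ^ (2 * m) * x ^ (-(H * (2 * (m : ℝ) + 1))) = x ^ (-H) := by
  rw [← Real.rpow_mul_natCast hx.le, ← Real.rpow_add hx]
  congr 1
  push_cast
  ring

theorem RH_pow_mul_rpow_mul_rpow_le (hH₀ : 0 ≤ H) (hH₁ : H ≤ 1) (hs : 0 < s) (hst : s ≤ t)
    (m : ℕ) :
    RH H t s ^ (2 * m) * t ^ (-(H * (2 * (m : ℝ) + 1))) * s ^ (-(H * (2 * (m : ℝ) + 1))) ≤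
      t ^ (-H) * s ^ (-H) * exp (-(2 * correlationGap H * m) * (1 - s / t) ^ (2 * H)) := by
  have ht : 0 < t := hs.trans_le hst
  have hRH₀ := RH_nonneg hH₀ ht.le hs.le
  calc RH H t s ^ (2 * m) * t ^ (-(H * (2 * (m : ℝ) + 1))) * s ^ (-(H * (2 * (m : ℝ) + 1)))
      ≤ (t ^ H * s ^ H * exp (-correlationGap H * (1 - s / t) ^ (2 * H))) ^ (2 * m) *
          t ^ (-(H * (2 * (m : ℝ) + 1))) * s ^ (-(H * (2 * (m : ℝ) + 1))) := by
        gcongr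
        exact RH_le_mul_exp hH₀ hH₁ ht hs.le hst
    _ = ((t ^ H) ^ (2 * m) * t ^ (-(H * (2 * (m : ℝ) + 1)))) *
          ((s ^ H) ^ (2 * m) * s ^ (-(H * (2 * (m : ℝ) + 1)))) *
          exp (-correlationGap H * (1 - s / t) ^ (2 * H)) ^ (2 * m) := by
        rw [mul_pow, mul_pow]; ring
    _ = t ^ (-H) * s ^ (-H) * exp (-(2 * correlationGap H * m) * (1 - s / t) ^ (2 * H)) := by
        rw [rpow_pow_two_mul_mul_rpow_neg ht, rpow_pow_two_mul_mul_rpow_neg hs, ← exp_nat_mul]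
        congr 2
        push_cast
        ring

theorem RH_div_pow_mul_rpow_mul_rpow_le (hH₀ : 0 ≤ H) (hH₁ : H ≤ 1) (hs : 0 < s) (hst : s ≤ t)
    {r : ℝ} (hr : 0 < r) (m : ℕ) :
    RH H (t / r) (s / r) ^ (2 * m) * (t / r) ^ (-(H * (2 * (m : ℝ) + 1))) *
        (s / r) ^ (-(H * (2 * (m : ℝ) + 1))) ≤
      r ^ (2 * H) *
        (t ^ (-H) * s ^ (-H) * exp (-(2 * correlationGap H * m) * (1 - s / t) ^ (2 * H))) := by
  have ht : 0 < t := hs.trans_le hst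
  refine (RH_pow_mul_rpow_mul_rpow_le hH₀ hH₁ (by positivity) (by gcongr) m).trans_eq ?_
  rw [div_div_div_cancel_right₀ hr.ne', Real.div_rpow ht.le hr.le, Real.div_rpow hs.le hr.le,
    Real.rpow_neg hr.le, div_inv_eq_mul, div_inv_eq_mul, two_mul H, Real.rpow_add hr]
  ring

theorem inv_sq_mul_sum_sum_RH_le (hH₀ : 0 < H) (hH₁ : H < 1) {m n : ℕ} (hm : m ≠ 0) (hn : n ≠ 0) :
    ((n : ℝ) ^ 2)⁻¹ *
        ∑ i ∈ Finset.Ico 1 n, ∑ j ∈ Finset.Ico 1 i,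
          RH H ((i : ℝ) / n) ((j : ℝ) / n) ^ (2 * m) *
            ((i : ℝ) / n) ^ (-(H * (2 * (m : ℝ) + 1))) *
            ((j : ℝ) / n) ^ (-(H * (2 * (m : ℝ) + 1))) ≤
      (2 ^ H + 2 / (1 - H)) / (1 - H) * Real.Gamma (1 / (2 * H) + 1) *
        (2 * correlationGap H * m) ^ (-1 / (2 * H)) := by
  have hδ := correlationGap_pos hH₁
  have hn₀ : (0 : ℝ) < n := by positivity
  have hscale : (n : ℝ) ^ (2 * H) * ((n : ℝ) ^ (1 - H)) ^ 2 = (n : ℝ) ^ 2 := by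
    rw [← Real.rpow_mul_natCast hn₀.le, ← Real.rpow_add hn₀, ← Real.rpow_natCast]
    congr 1
    push_cast
    ring
  rw [inv_mul_le_iff₀ (by positivity), ← hscale, mul_assoc ((n : ℝ) ^ (2 * H)), mul_comm (_ ^ 2)]
  calc ∑ i ∈ Finset.Ico 1 n, ∑ j ∈ Finset.Ico 1 i,
        RH H ((i : ℝ) / n) ((j : ℝ) / n) ^ (2 * m) *
          ((i : ℝ) / n) ^ (-(H * (2 * (m : ℝ) + 1))) *
          ((j : ℝ) / n) ^ (-(H * (2 * (m : ℝ) + 1)))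
      ≤ ∑ i ∈ Finset.Ico 1 n, ∑ j ∈ Finset.Ico 1 i, (n : ℝ) ^ (2 * H) *
          ((i : ℝ) ^ (-H) * (j : ℝ) ^ (-H) *
            exp (-(2 * correlationGap H * m) * (1 - (j : ℝ) / i) ^ (2 * H))) := by
        refine Finset.sum_le_sum fun i _ ↦ Finset.sum_le_sum fun j hj ↦ ?_
        obtain ⟨hj₁, hji⟩ := Finset.mem_Ico.1 hj
        exact RH_div_pow_mul_rpow_mul_rpow_le hH₀.le hH₁.le (Nat.cast_pos.2 hj₁)
          (Nat.cast_le.2 hji.le) hn₀ m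
    _ ≤ _ := by
        simp only [← Finset.mul_sum]
        gcongr
        exact sum_sum_rpow_neg_mul_rpow_neg_mul_exp_le hH₀.le hH₁ (by positivity)
          (by positivity) n

end Covariance

theorem statement13_general (H : ℝ) (hH₀ : 0 < H) (hH₁ : H < 1) :
    ∃ c : ℝ, 0 < c ∧ ∀ m n : ℕ, 1 ≤ m → 1 ≤ n →
      ((n : ℝ) ^ 2)⁻¹ *
          ∑ i ∈ Finset.Ico 1 n, ∑ j ∈ Finset.Ico 1 i,
            RH H ((i : ℝ) / n) ((j : ℝ) / n) ^ (2 * m) *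
              ((i : ℝ) / n) ^ (-(H * (2 * (m : ℝ) + 1))) *
              ((j : ℝ) / n) ^ (-(H * (2 * (m : ℝ) + 1))) ≤
        c * (m : ℝ) ^ (-(1 / (2 * H))) := by
  have hδ := correlationGap_pos hH₁
  have : 0 < 1 - H := by linarith
  have : 0 < Real.Gamma (1 / (2 * H) + 1) := Real.Gamma_pos_of_pos (by positivity)
  refine ⟨(2 ^ H + 2 / (1 - H)) / (1 - H) * Real.Gamma (1 / (2 * H) + 1) *
    (2 * correlationGap H) ^ (-1 / (2 * H)), by positivity, fun m n hm hn ↦ ?_⟩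
  refine (inv_sq_mul_sum_sum_RH_le hH₀ hH₁ (by omega) (by omega)).trans_eq ?_
  rw [Real.mul_rpow (by positivity) m.cast_nonneg, neg_div, mul_assoc _ (_ ^ _)]

theorem statement13 (H : ℝ) (hH : 1 / 2 < H) (hH' : H < 1) :
    ∃ c : ℝ, 0 < c ∧ ∀ m n : ℕ, 1 ≤ m → 2 ≤ n →
      ((n : ℝ) ^ 2)⁻¹ *
          ∑ i ∈ Finset.Ico 1 n, ∑ j ∈ Finset.Ico 1 i,
            RH H ((i : ℝ) / n) ((j : ℝ) / n) ^ (2 * m) *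
              ((i : ℝ) / n) ^ (-(H * (2 * (m : ℝ) + 1))) *
              ((j : ℝ) / n) ^ (-(H * (2 * (m : ℝ) + 1))) ≤
        c * (m : ℝ) ^ (-(1 / (2 * H))) := by
  obtain ⟨c, hc, hbound⟩ := statement13_general H (by linarith) hH'
  exact ⟨c, hc, fun m n hm hn ↦ hbound m n hm (by omega)⟩
end
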